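/- arXiv:2402.02390 — 2 statements merged into one kernel-verified Lean document; each statement's English description precedes it below -/
import Mathlib

section
/- There is a constant c' such that for all n, every trifferent code C ⊆ {0,1,2}^n in which each codeword contains exactly three 2's satisfies |C| ≤ c' · n^(13/5). -/
def Trifferent {n : ℕ} (C : Finset (Fin n → Fin 3)) : Prop :=
  ∀ x ∈ C, ∀ y ∈ C, ∀ z ∈ C, x ≠ y → x ≠ z → y ≠ z →
    ∃ i : Fin n, ({x i, y i, z i} : Set (Fin 3)) = Set.univ

/-!
For codewords with exactly `r + 1` twos, join a coordinate `a` to an `r`-set `P ∌ a` whenever some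
codeword has its twos exactly on `insert a P`. With `s = 2 ^ r + 1`, this bipartite graph contains
no `K_{s, 2 ^ (s * (s - 1)) + 1}`. Indeed, for the `s` coordinates `A` of such a subgraph, the
codewords `w a P` restricted to `A` are described by one bit for each pair of distinct elements of
`A`, so two `r`-sets `P ≠ P'` give the same restrictions; and `s > 2 ^ r` yields `a ≠ b` in `A` for
which `w a P` and `w b P` have the same ones on `P'`. No coordinate then separates `w a P`,
`w a P'` and `w b P`. The Kővári–Sós–Turán theorem bounds the number of edges by
`O(n ^ (r + 1 - r / s))`, and at most two codewords share the same set of twos.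
-/

open Finset

section KovariSosTuran

variable {α β : Type*} (R : α → β → Prop) [∀ a b, Decidable (R a b)] (S : Finset α) (T : Finset β)

lemma sum_choose_card_bipartiteBelow (k : ℕ) :
    ∑ b ∈ T, (#(S.bipartiteBelow R b)).choose k =
      ∑ A ∈ S.powersetCard k, #{b ∈ T | ∀ a ∈ A, R a b} := by
  have powersetCard_bipartiteBelow (b : β) :
      (S.bipartiteBelow R b).powersetCard k = {A ∈ S.powersetCard k | ∀ a ∈ A, R a b} := by
    ext A
    simp only [mem_powersetCard, mem_filter, subset_iff, mem_bipartiteBelow]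
    grind
  simp_rw [← card_powersetCard, powersetCard_bipartiteBelow]
  exact (sum_card_bipartiteAbove_eq_sum_card_bipartiteBelow fun A b ↦ ∀ a ∈ A, R a b).symm

variable {S T} {k m : ℕ}

lemma sum_card_bipartiteBelow_sub_pow_le
    (hfree : ∀ A ⊆ S, ∀ B ⊆ T, #A = k + 1 → (∀ a ∈ A, ∀ b ∈ B, R a b) → #B ≤ m) :
    ∑ b ∈ T, (#(S.bipartiteBelow R b) - k) ^ (k + 1) ≤ m * #S ^ (k + 1) :=
  calc
    ∑ b ∈ T, (#(S.bipartiteBelow R b) - k) ^ (k + 1)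
      ≤ ∑ b ∈ T, (k + 1).factorial * (#(S.bipartiteBelow R b)).choose (k + 1) := by
        gcongr with b
        simpa [← Nat.descFactorial_eq_factorial_mul_choose] using
          Nat.pow_sub_le_descFactorial #(S.bipartiteBelow R b) (k + 1)
    _ = (k + 1).factorial * ∑ A ∈ S.powersetCard (k + 1), #{b ∈ T | ∀ a ∈ A, R a b} := by
        rw [← mul_sum, sum_choose_card_bipartiteBelow]
    _ ≤ (k + 1).factorial * ((#S).choose (k + 1) * m) := by
        gcongr
        rw [← card_powersetCard, ← smul_eq_mul]
        refine sum_le_card_nsmul _ _ m fun A hA ↦ ?_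
        obtain ⟨hAS, hA_card⟩ := mem_powersetCard.1 hA
        exact hfree A hAS _ (filter_subset _ _) hA_card fun a ha b hb ↦ (mem_filter.1 hb).2 a ha
    _ = m * (#S).descFactorial (k + 1) := by
        rw [Nat.descFactorial_eq_factorial_mul_choose]
        ring
    _ ≤ m * #S ^ (k + 1) := by
        gcongr
        exact Nat.descFactorial_le_pow _ _

theorem kovari_sos_turan
    (hfree : ∀ A ⊆ S, ∀ B ⊆ T, #A = k + 1 → (∀ a ∈ A, ∀ b ∈ B, R a b) → #B ≤ m) :
    ((∑ a ∈ S, #(T.bipartiteAbove R a) : ℕ) : ℝ) ≤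
      (m : ℝ) ^ ((k + 1 : ℕ) : ℝ)⁻¹ * #S * ((#T : ℝ) ^ k) ^ ((k + 1 : ℕ) : ℝ)⁻¹ + k * #T := by
  set E := ∑ b ∈ T, (#(S.bipartiteBelow R b) - k)
  have edges_le : ∑ a ∈ S, #(T.bipartiteAbove R a) ≤ E + k * #T :=
    calc
      ∑ a ∈ S, #(T.bipartiteAbove R a) = ∑ b ∈ T, #(S.bipartiteBelow R b) :=
        sum_card_bipartiteAbove_eq_sum_card_bipartiteBelow R
      _ ≤ ∑ b ∈ T, (#(S.bipartiteBelow R b) - k + k) := by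
        gcongr
        exact le_tsub_add
      _ = E + k * #T := by
        rw [sum_add_distrib, sum_const, smul_eq_mul, mul_comm k]
  have E_pow_le : E ^ (k + 1) ≤ #T ^ k * (m * #S ^ (k + 1)) :=
    (pow_sum_le_card_mul_sum_pow (fun _ _ ↦ Nat.zero_le _) k).trans <|
      Nat.mul_le_mul_left _ (sum_card_bipartiteBelow_sub_pow_le R hfree)
  have E_le : (E : ℝ) ≤
      (m : ℝ) ^ ((k + 1 : ℕ) : ℝ)⁻¹ * #S * ((#T : ℝ) ^ k) ^ ((k + 1 : ℕ) : ℝ)⁻¹ := by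
    refine le_of_pow_le_pow_left₀ k.succ_ne_zero (by positivity) ?_
    rw [mul_pow, mul_pow, Real.rpow_inv_natCast_pow (by positivity) k.succ_ne_zero,
      Real.rpow_inv_natCast_pow (by positivity) k.succ_ne_zero, mul_comm]
    exact_mod_cast E_pow_le
  calc
    ((∑ a ∈ S, #(T.bipartiteAbove R a) : ℕ) : ℝ) ≤ E + k * #T := mod_cast edges_le
    _ ≤ _ := by gcongr

end KovariSosTuran

section SetFamily

variable {α : Type*} [DecidableEq α] {𝒜 : Finset (Finset α)} {r : ℕ}

lemma card_memberSubfamily (𝒜 : Finset (Finset α)) (a : α) :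
    #(𝒜.memberSubfamily a) = #{s ∈ 𝒜 | a ∈ s} :=
  card_image_of_injOn fun s hs t ht h ↦ by
    rw [← insert_erase (mem_filter.1 hs).2, h, insert_erase (mem_filter.1 ht).2]

variable [Fintype α]

lemma sum_card_memberSubfamily (𝒜 : Finset (Finset α)) :
    ∑ a, #(𝒜.memberSubfamily a) = ∑ s ∈ 𝒜, #s := by
  simp_rw [card_memberSubfamily]
  simpa [bipartiteAbove, bipartiteBelow] using
    sum_card_bipartiteAbove_eq_sum_card_bipartiteBelow (s := univ) (t := 𝒜) (· ∈ ·)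

lemma bipartiteAbove_mem_memberSubfamily (h𝒜 : (𝒜 : Set (Finset α)).Sized (r + 1)) (a : α) :
    (univ.powersetCard r).bipartiteAbove (fun a P ↦ P ∈ 𝒜.memberSubfamily a) a =
      𝒜.memberSubfamily a := by
  ext P
  simp only [mem_bipartiteAbove, mem_powersetCard, subset_univ, true_and, and_iff_right_iff_imp,
    mem_memberSubfamily]
  rintro ⟨hP, ha⟩
  simpa [card_insert_of_notMem ha] using h𝒜 hP

theorem succ_mul_card_le_of_sized {k m : ℕ} (h𝒜 : (𝒜 : Set (Finset α)).Sized (r + 1))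
    (hfree : ∀ A, ∀ ℱ ⊆ univ.powersetCard r, #A = k + 1 →
      (∀ a ∈ A, ∀ P ∈ ℱ, P ∈ 𝒜.memberSubfamily a) → #ℱ ≤ m) :
    ((r + 1) * #𝒜 : ℝ) ≤ (m : ℝ) ^ ((k + 1 : ℕ) : ℝ)⁻¹ * Fintype.card α *
      (((Fintype.card α).choose r : ℝ) ^ k) ^ ((k + 1 : ℕ) : ℝ)⁻¹ +
        k * (Fintype.card α).choose r := by
  have card_edges : ∑ a, #(𝒜.memberSubfamily a) = (r + 1) * #𝒜 := by
    rw [sum_card_memberSubfamily, sum_const_nat fun s hs ↦ h𝒜 hs, mul_comm]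
  have edges_le := kovari_sos_turan (fun a P ↦ P ∈ 𝒜.memberSubfamily a)
    (S := univ) (T := univ.powersetCard r) fun A _ ↦ hfree A
  simp_rw [bipartiteAbove_mem_memberSubfamily h𝒜, card_edges, card_powersetCard, card_univ]
    at edges_le
  exact_mod_cast edges_le

end SetFamily

section Twos

variable {ι : Type*} [Fintype ι] {x y : ι → Fin 3} {i : ι}

/-- The set of coordinates at which the ternary word `x` takes the value `2`. -/
def twos (x : ι → Fin 3) : Finset ι := {i | x i = 2}

@[simp]
lemma mem_twos : i ∈ twos x ↔ x i = 2 := by simp [twos]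

lemma apply_eq_apply_of_mem_twos_iff (h₂ : i ∈ twos x ↔ i ∈ twos y) (h₁ : x i = 1 ↔ y i = 1) :
    x i = y i := by
  rw [mem_twos, mem_twos] at h₂
  generalize x i = p at *
  generalize y i = q at *
  decide +revert

end Twos

namespace Trifferent

variable {n : ℕ} {C : Finset (Fin n → Fin 3)}

lemma exists_pairwise_ne (hC : Trifferent C) {x y z : Fin n → Fin 3} (hx : x ∈ C) (hy : y ∈ C)
    (hz : z ∈ C) (hxy : x ≠ y) (hxz : x ≠ z) (hyz : y ≠ z) :
    ∃ i ∈ twos x ∪ twos y ∪ twos z, x i ≠ y i ∧ x i ≠ z i ∧ y i ≠ z i := by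
  obtain ⟨i, hi⟩ := hC x hx y hy z hz hxy hxz hyz
  have mem (v : Fin 3) : v = x i ∨ v = y i ∨ v = z i := by simpa using hi.ge (Set.mem_univ v)
  refine ⟨i, ?_, ?_⟩
  · simpa [or_assoc, eq_comm] using mem 2
  · clear hi
    generalize x i = p, y i = q, z i = s at mem
    decide +revert

lemma card_le_two_mul_card_image_twos (hC : Trifferent C) : #C ≤ 2 * #(C.image twos) := by
  refine card_le_mul_card_image C 2 fun t _ ↦ ?_
  by_contra! hfiber
  obtain ⟨x, y, z, hx, hy, hz, hxy, hxz, hyz⟩ := two_lt_card_iff.1 hfiber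
  rw [mem_filter] at hx hy hz
  obtain ⟨i, hi, hxy_i, -, -⟩ := hC.exists_pairwise_ne hx.1 hy.1 hz.1 hxy hxz hyz
  rw [hx.2, hy.2, hz.2, union_self, union_self] at hi
  exact hxy_i <| (mem_twos.1 (hx.2 ▸ hi)).trans (mem_twos.1 (hy.2 ▸ hi)).symm

lemma exists_ne_of_twos_eq_insert (hC : Trifferent C) {x y z : Fin n → Fin 3}
    (hx : x ∈ C) (hy : y ∈ C) (hz : z ∈ C) {a b : Fin n} {P P' : Finset (Fin n)}
    (hxP : twos x = insert a P) (hyP' : twos y = insert a P') (hzP : twos z = insert b P)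
    (hab : a ≠ b) (hPP' : P ≠ P') (haP : a ∉ P) (haP' : a ∉ P') (hbP' : b ∉ P') :
    ∃ i ∈ insert b P', x i ≠ y i ∧ x i ≠ z i := by
  have hxy : x ≠ y := by
    rintro rfl
    exact hPP' <| by rw [← erase_insert haP, ← hxP, hyP', erase_insert haP']
  have hxz : x ≠ z := by
    rintro rfl
    exact hab <| (insert_inj haP).1 (hxP.symm.trans hzP)
  have hyz : y ≠ z := by
    rintro rfl
    have hb : b ∈ insert a P' := by simp [← hyP', hzP]
    simp [hab.symm, hbP'] at hb
  obtain ⟨i, hi, hxy_i, hxz_i, -⟩ := hC.exists_pairwise_ne hx hy hz hxy hxz hyz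
  refine ⟨i, ?_, hxy_i, hxz_i⟩
  have hia : i ≠ a := by
    rintro rfl
    exact hxy_i <| (mem_twos.1 (by simp [hxP])).trans (mem_twos.1 (by simp [hyP'])).symm
  have hiP : i ∉ P := fun hiP ↦
    hxz_i <| (mem_twos.1 (by simp [hxP, hiP])).trans (mem_twos.1 (by simp [hzP, hiP])).symm
  simpa [hxP, hyP', hzP, hia, hiP, or_comm] using hi

theorem card_le_of_forall_mem_memberSubfamily (hC : Trifferent C) {A : Finset (Fin n)}
    {ℱ : Finset (Finset (Fin n))} (hA : ∀ P ∈ ℱ, 2 ^ #P < #A)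
    (hAℱ : ∀ a ∈ A, ∀ P ∈ ℱ, P ∈ (C.image twos).memberSubfamily a) :
    #ℱ ≤ 2 ^ #A.offDiag := by
  have notMem : ∀ P ∈ ℱ, ∀ a ∈ A, a ∉ P := fun P hP a ha ↦
    (mem_memberSubfamily.1 (hAℱ a ha P hP)).2
  have exists_word : ∀ P ∈ ℱ, ∀ a ∈ A, ∃ x ∈ C, twos x = insert a P := fun P hP a ha ↦
    mem_image.1 (mem_memberSubfamily.1 (hAℱ a ha P hP)).1
  choose! w w_mem twos_w using exists_word
  by_contra! hℱ_card
  rw [← card_powerset] at hℱ_card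
  obtain ⟨P, hP, P', hP', hPP', ones_offDiag⟩ := exists_ne_map_eq_of_card_lt_of_maps_to hℱ_card
    (f := fun P ↦ {q ∈ A.offDiag | w P q.1 q.2 = 1}) fun _ _ ↦ mem_powerset.2 (filter_subset _ _)
  have hA_card : #P'.powerset < #A := card_powerset P' ▸ hA P' hP'
  obtain ⟨a, ha, b, hb, hab, ones_P'⟩ := exists_ne_map_eq_of_card_lt_of_maps_to hA_card
    (f := fun a ↦ {i ∈ P' | w P a i = 1}) fun _ _ ↦ mem_powerset.2 (filter_subset _ _)
  obtain ⟨i, hi, hne_P', hne_b⟩ := hC.exists_ne_of_twos_eq_insert (w_mem P hP a ha)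
    (w_mem P' hP' a ha) (w_mem P hP b hb) (twos_w P hP a ha) (twos_w P' hP' a ha)
    (twos_w P hP b hb) hab hPP' (notMem P hP a ha) (notMem P' hP' a ha) (notMem P' hP' b hb)
  obtain rfl | hiP' := mem_insert.1 hi
  · refine hne_P' <| apply_eq_apply_of_mem_twos_iff ?_ ?_
    · simp [twos_w P hP a ha, twos_w P' hP' a ha, notMem P hP i hb, notMem P' hP' i hb]
    · simpa [ha, hb, hab] using Finset.ext_iff.1 ones_offDiag (a, i)
  · have hiA : i ∉ A := fun hiA ↦ notMem P' hP' i hiA hiP'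
    refine hne_b <| apply_eq_apply_of_mem_twos_iff ?_ ?_
    · simp [twos_w P hP a ha, twos_w P hP b hb, ne_of_mem_of_not_mem ha hiA |>.symm,
        ne_of_mem_of_not_mem hb hiA |>.symm]
    · simpa [hiP'] using Finset.ext_iff.1 ones_P' i

theorem succ_mul_card_image_twos_le (hC : Trifferent C) {r : ℕ} (hr : ∀ x ∈ C, #(twos x) = r + 1) :
    ((r + 1) * #(C.image twos) : ℝ) ≤
      2 ^ 2 ^ r * n * ((n.choose r : ℝ) ^ 2 ^ r) ^ ((2 ^ r + 1 : ℕ) : ℝ)⁻¹ +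
        2 ^ r * n.choose r := by
  have sized : (C.image twos : Set (Finset (Fin n))).Sized (r + 1) := by
    simpa [Set.Sized] using hr
  have free (A : Finset (Fin n)) (ℱ) (hℱ : ℱ ⊆ univ.powersetCard r) (hA : #A = 2 ^ r + 1)
      (hAℱ : ∀ a ∈ A, ∀ P ∈ ℱ, P ∈ (C.image twos).memberSubfamily a) :
      #ℱ ≤ (2 ^ 2 ^ r) ^ (2 ^ r + 1) := by
    have card_offDiag : #A.offDiag = 2 ^ r * (2 ^ r + 1) := by
      rw [offDiag_card, hA, ← Nat.sub_one_mul, Nat.add_sub_cancel]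
    rw [← pow_mul, ← card_offDiag]
    refine hC.card_le_of_forall_mem_memberSubfamily (fun P hP ↦ ?_) hAℱ
    rw [(mem_powersetCard.1 (hℱ hP)).2, hA]
    exact Nat.lt_succ_self _
  have edges_le := succ_mul_card_le_of_sized sized free
  rw [Fintype.card_fin, Nat.cast_pow,
    Real.pow_rpow_inv_natCast (by positivity) (Nat.succ_ne_zero _)] at edges_le
  exact_mod_cast edges_le

end Trifferent

lemma mul_rpow_add_mul_le_mul_rpow {c N t : ℝ} {r k : ℕ} (hc : 0 ≤ c) (hN : 1 ≤ N) (ht : 0 ≤ t)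
    (htN : t ≤ N ^ r) (hrk : r ≤ k) :
    c * N * (t ^ k) ^ ((k + 1 : ℕ) : ℝ)⁻¹ + k * t ≤ (c + k) * N ^ ((r : ℝ) + 1 - r / (k + 1)) := by
  have hN₀ : 0 < N := by positivity
  have rpow_le : N * (t ^ k) ^ ((k + 1 : ℕ) : ℝ)⁻¹ ≤ N ^ ((r : ℝ) + 1 - r / (k + 1)) :=
    calc
      N * (t ^ k) ^ ((k + 1 : ℕ) : ℝ)⁻¹ ≤ N * ((N ^ r) ^ k) ^ ((k + 1 : ℕ) : ℝ)⁻¹ := by gcongr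
      _ = N ^ ((r : ℝ) + 1 - r / (k + 1)) := by
        rw [← pow_mul, ← Real.rpow_natCast_mul hN₀.le, ← Real.rpow_one_add' hN₀.le (by positivity)]
        congr 1
        push_cast
        field_simp
        ring
  have le_rpow : t ≤ N ^ ((r : ℝ) + 1 - r / (k + 1)) := by
    have hrk_div : (r : ℝ) / (k + 1) ≤ 1 :=
      div_le_one_of_le₀ (mod_cast hrk.trans k.le_succ) (by positivity)
    rw [← Real.rpow_natCast] at htN
    exact htN.trans <| Real.rpow_le_rpow_of_exponent_le hN (by linarith)
  rw [mul_assoc, add_mul]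
  gcongr

theorem three_bounded_trifferent_bound_general (r : ℕ) {n : ℕ} {C : Finset (Fin n → Fin 3)}
    (hC : Trifferent C) (hr : ∀ x ∈ C, #(twos x) = r + 1) :
    (#C : ℝ) ≤ 2 * (2 ^ 2 ^ r + 2 ^ r) / (r + 1) * (n : ℝ) ^ ((r : ℝ) + 1 - r / (2 ^ r + 1)) := by
  obtain rfl | ⟨x, hx⟩ := C.eq_empty_or_nonempty
  · simp only [card_empty, Nat.cast_zero]
    positivity
  have hn : 1 ≤ n := by
    obtain ⟨i, -⟩ : (twos x).Nonempty := card_pos.1 (hr x hx ▸ r.succ_pos)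
    exact i.pos
  have card_le : (#C : ℝ) ≤ 2 * #(C.image twos) := mod_cast hC.card_le_two_mul_card_image_twos
  have edges_le := (hC.succ_mul_card_image_twos_le hr).trans <| by
    simpa using mul_rpow_add_mul_le_mul_rpow (c := 2 ^ 2 ^ r) (N := n) (t := n.choose r) (r := r)
      (k := 2 ^ r) (by positivity) (mod_cast hn) (by positivity)
      (mod_cast Nat.choose_le_pow n r) r.lt_two_pow_self.le
  calc
    (#C : ℝ) ≤ 2 * #(C.image twos) := card_le
    _ = 2 / (r + 1) * ((r + 1) * #(C.image twos)) := by field_simp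
    _ ≤ 2 / (r + 1) * ((2 ^ 2 ^ r + 2 ^ r) * (n : ℝ) ^ ((r : ℝ) + 1 - r / (2 ^ r + 1))) := by
      gcongr
    _ = _ := by ring

theorem three_bounded_trifferent_bound :
    ∃ c' : ℝ, ∀ n : ℕ, ∀ C : Finset (Fin n → Fin 3), Trifferent C →
      (∀ x ∈ C, (Finset.univ.filter fun i => x i = 2).card = 3) →
      (C.card : ℝ) ≤ c' * (n : ℝ) ^ ((13 : ℝ) / 5) := by
  refine ⟨40 / 3, fun n C hC h3 ↦ ?_⟩
  convert three_bounded_trifferent_bound_general 2 hC h3 using 2 <;> norm_num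
end

section
/- There exists a universal constant c such that every trifferent code C ⊆ {0,1,2}^n satisfies |C| ≤ c · n^(−2/5) · (3/2)^n. -/
/-!
Average over all words `w`. A codeword agrees with `w` in exactly two coordinates for
`n.choose 2 * 2 ^ (n - 2)` of the `3 ^ n` words `w`, so it is enough to bound, for a fixed `w`, the
codewords with this property. At most two of them share a pair of coordinates, and the pairs are the
edges of a graph on the coordinates. A coordinate outside the edge of a codeword is colored by which
of the two letters other than the letter of `w` the codeword has there. Trifference then says that
any three edges are separated: one of them contains a vertex off the other two to which these give
different colors.

A graph with such a coloring has no triangles. Consider dominoes (pairs of 4-cycles with the common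
edge `q r`) formed by three paths `x a r y`, `x q r y`, `x q b y` whose colors at their own vertices
agree. If there are many of them with the same `x`, `y`, `a`, `b`, then by Ramsey's theorem three
are colored in a common pattern, and the separation conditions within this pattern contradict each
other. So the number of paths `a r q b` formed by the middle edges of such paths is bounded, and
Hölder's inequality turns this into `e ^ 5 = O(n ^ 8)` for the number `e` of edges.
-/

section Separation

variable {V : Type*} {G : SimpleGraph V} {χ : Sym2 V → V → Prop}

/-- Every edge `e` two-colors the vertices by `χ e`; only the colors off `e` matter. The vertex `v`
distinguishes `e` and `e'` if it lies on neither and receives different colors from them. -/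
def Distinguishes (χ : Sym2 V → V → Prop) (v : V) (e e' : Sym2 V) : Prop :=
  v ∉ e ∧ v ∉ e' ∧ ¬(χ e v ↔ χ e' v)

/-- Some endpoint of one of the three edges distinguishes the other two: the trifference condition
for codewords that agree with a fixed word in exactly two coordinates. -/
def Separated (χ : Sym2 V → V → Prop) (e₁ e₂ e₃ : Sym2 V) : Prop :=
  (∃ v ∈ e₁, Distinguishes χ v e₂ e₃) ∨ (∃ v ∈ e₂, Distinguishes χ v e₁ e₃) ∨
    ∃ v ∈ e₃, Distinguishes χ v e₁ e₂

/-- Any three distinct edges are separated, as if they came from the words of a trifferent code. -/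
def IsSeparating (G : SimpleGraph V) (χ : Sym2 V → V → Prop) : Prop :=
  ∀ ⦃e₁⦄, e₁ ∈ G.edgeSet → ∀ ⦃e₂⦄, e₂ ∈ G.edgeSet → ∀ ⦃e₃⦄, e₃ ∈ G.edgeSet →
    e₁ ≠ e₂ → e₁ ≠ e₃ → e₂ ≠ e₃ → Separated χ e₁ e₂ e₃

theorem IsSeparating.not_triangle (hχ : IsSeparating G χ) {u v w : V} (huv : G.Adj u v)
    (hvw : G.Adj v w) (hwu : G.Adj w u) : False := by
  have := hχ (e₁ := s(u, v)) huv (e₂ := s(v, w)) hvw (e₃ := s(w, u)) hwu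
  have h₁ := huv.ne
  have h₂ := hvw.ne
  have h₃ := hwu.ne
  simp only [Separated, Distinguishes, Sym2.mem_iff, exists_eq_or_imp, exists_eq_left] at this
  grind

theorem IsSeparating.not_iff_or_not_iff_of_path (hχ : IsSeparating G χ) {u v w z : V}
    (huv : G.Adj u v) (hvw : G.Adj v w) (hwz : G.Adj w z) (huw : u ≠ w) (hvz : v ≠ z) :
    ¬(χ s(v, w) u ↔ χ s(w, z) u) ∨ ¬(χ s(u, v) z ↔ χ s(v, w) z) := by
  have hs := hχ (e₁ := s(u, v)) huv (e₂ := s(v, w)) hvw (e₃ := s(w, z)) hwz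
  have := hvw.ne
  simp only [Separated, Distinguishes, Sym2.mem_iff, exists_eq_or_imp, exists_eq_left] at hs
  grind

end Separation

section ThetaPattern

/-- The vertices of the domino, two 4-cycles glued along the edge `q r`:
```
a - r - y
|   |   |
x - q - b
```
It is the union of the paths `x a r y`, `x q r y` and `x q b y`. -/
inductive Domino
  | x | a | q | r | b | y
  deriving DecidableEq

namespace Domino

instance : Fintype Domino := ⟨{x, a, q, r, b, y}, by rintro (_ | _) <;> decide⟩

/-- The edges of the domino, oriented from `x` to `y`. -/
def arrow : Domino → Domino → Bool
  | x, a | x, q | a, r | q, r | q, b | r, y | b, y => true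
  | _, _ => false

/-- In a family of dominoes only `q` and `r` move, the other four vertices are shared. -/
def moving : Domino → Bool
  | q | r => true
  | _ => false

/-- The symmetry of the domino that exchanges `x` and `y`. -/
def reflect : Domino → Domino
  | x => y | a => b | q => r | r => q | b => a | y => x

end Domino

open Domino

/-- The colors that an edge `k l` gives to a vertex `m` of a path `x q r y`, for the six pairs of an
edge and a vertex off it. -/
abbrev PathColors : Type := Prop × Prop × Prop × Prop × Prop × Prop

/-- The colors of a homogeneous family of dominoes: `β o k l m` is the color that the edge `k l` of
the `i`-th domino gives to the vertex `m` of the `j`-th one, where `o` compares `i` with `j`. -/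
abbrev Pattern := Ordering → Domino → Domino → Domino → Prop

namespace Pattern

/-- The pattern of the family with its indices in reverse order. -/
def reverse (β : Pattern) : Pattern := fun o k l m => β o.swap k l m

/-- The pattern of the family with every domino reflected. -/
def reflect (β : Pattern) : Pattern := fun o k l m => β o l.reflect k.reflect m.reflect

/-- The colors on the path `x k l y` of a single domino. -/
def pathColors (β : Pattern) (k l : Domino) : PathColors :=
  (β .eq k l x, β .eq k l y, β .eq x k l, β .eq x k y, β .eq l y k, β .eq l y x)

end Pattern

/-- The order relation on which the color of vertex `m` of domino `j` under edge `k l` of domino `i`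
depends; there is none unless both the edge and the vertex move. -/
def relOrder (k l m : Domino) (i j : Fin 3) : Ordering :=
  if (moving k ∨ moving l) ∧ moving m then cmp i j else .eq

/-- Three dominoes `p · i` that share `x`, `a`, `b`, `y`, are colored according to `β`, and have the
same colors on their paths `x a r y`, `x q r y` and `x q b y`; there are in fact none
(`not_isThetaPattern`). In the names of lemmas, `kl_m` stands for `β .eq k l m`, and `kl_m_lt` and
`kl_m_gt` for `β .lt k l m` and `β .gt k l m`. -/
structure IsThetaPattern {V : Type*} (G : SimpleGraph V) (χ : Sym2 V → V → Prop)
    (p : Domino → Fin 3 → V) (β : Pattern) : Prop where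
  separating : IsSeparating G χ
  eq_iff : ∀ {k i l j}, p k i = p l j ↔ k = l ∧ (moving k → i = j)
  adj : ∀ {k l} i, arrow k l → G.Adj (p k i) (p l i)
  color : ∀ k l i m j, χ s(p k i, p l i) (p m j) = β (relOrder k l m i j) k l m
  ar_colors : β.pathColors a r = β.pathColors q r
  qb_colors : β.pathColors q b = β.pathColors q r

namespace IsThetaPattern

variable {V : Type*} {G : SimpleGraph V} {χ : Sym2 V → V → Prop} {p : Domino → Fin 3 → V}
  {β : Pattern}

theorem reverse (h : IsThetaPattern G χ p β) :
    IsThetaPattern G χ (fun k i => p k i.rev) β.reverse where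
  separating := h.separating
  eq_iff := by simp [h.eq_iff]
  adj i := h.adj i.rev
  color k l i m j := by
    have : relOrder k l m i.rev j.rev = (relOrder k l m i j).swap := by
      revert i j k l m; decide
    rw [h.color, this, Pattern.reverse]
  ar_colors := h.ar_colors
  qb_colors := h.qb_colors

theorem reflect (h : IsThetaPattern G χ p β) :
    IsThetaPattern G χ (fun k i => p k.reflect i) β.reflect where
  separating := h.separating
  eq_iff {k i l j} := by rw [h.eq_iff]; revert k l i j; decide
  adj {k l} i hkl := (h.adj i (by revert k l; decide)).symm
  color k l i m j := by
    have : relOrder l.reflect k.reflect m.reflect i j = relOrder k l m i j := by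
      revert i j k l m; decide
    rw [Sym2.eq_swap, h.color, this, Pattern.reflect]
  ar_colors := by
    have := h.qb_colors
    simp only [Pattern.pathColors, Prod.mk.injEq] at this
    simp [Pattern.pathColors, Pattern.reflect, Domino.reflect, this]
  qb_colors := by
    have := h.ar_colors
    simp only [Pattern.pathColors, Prod.mk.injEq] at this
    simp [Pattern.pathColors, Pattern.reflect, Domino.reflect, this]

theorem separated (h : IsThetaPattern G χ p β) (k₁ l₁ : Domino) (i₁ : Fin 3) (k₂ l₂ : Domino)
    (i₂ : Fin 3) (k₃ l₃ : Domino) (i₃ : Fin 3) (h₁ : arrow k₁ l₁ := by decide)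
    (h₂ : arrow k₂ l₂ := by decide) (h₃ : arrow k₃ l₃ := by decide) :
    let e₁ := s(p k₁ i₁, p l₁ i₁)
    let e₂ := s(p k₂ i₂, p l₂ i₂)
    let e₃ := s(p k₃ i₃, p l₃ i₃)
    e₁ ≠ e₂ → e₁ ≠ e₃ → e₂ ≠ e₃ → Separated χ e₁ e₂ e₃ :=
  h.separating (SimpleGraph.mem_edgeSet G |>.2 (h.adj i₁ h₁))
    (SimpleGraph.mem_edgeSet G |>.2 (h.adj i₂ h₂)) (SimpleGraph.mem_edgeSet G |>.2 (h.adj i₃ h₃))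

-- With these definitions `simp` evaluates `separated` to a propositional formula in the colors.
attribute [local simp] Separated Distinguishes moving relOrder cmp cmpUsing Pattern.reverse
  Pattern.reflect Pattern.pathColors Domino.reflect

theorem color_iff (h : IsThetaPattern G χ p β) :
    ((β .eq a r x ↔ β .eq q r x) ∧ (β .eq a r y ↔ β .eq q r y) ∧ (β .eq x a r ↔ β .eq x q r) ∧
      (β .eq x a y ↔ β .eq x q y) ∧ (β .eq r y a ↔ β .eq r y q)) ∧
    (β .eq q b x ↔ β .eq q r x) ∧ (β .eq q b y ↔ β .eq q r y) ∧ (β .eq x q b ↔ β .eq x q r) ∧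
      (β .eq b y q ↔ β .eq r y q) ∧ (β .eq b y x ↔ β .eq r y x) := by
  simpa using And.intro h.ar_colors h.qb_colors

theorem xq_q_lt_ne_xq_q_gt (h : IsThetaPattern G χ p β) : ¬(β .lt x q q ↔ β .gt x q q) := by
  simpa [h.eq_iff, h.color] using h.separated x q 0 x q 1 x q 2

theorem qb_q_gt_ne_xq_q_gt (h : IsThetaPattern G χ p β) : ¬(β .gt q b q ↔ β .gt x q q) := by
  simpa [h.eq_iff, h.color, h.color_iff] using h.separated x q 0 q b 1 x q 1

theorem qb_q_lt_ne_xq_q_lt (h : IsThetaPattern G χ p β) : ¬(β .lt q b q ↔ β .lt x q q) :=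
  h.reverse.qb_q_gt_ne_xq_q_gt

theorem ry_r_lt_ne_ry_r_gt (h : IsThetaPattern G χ p β) : ¬(β .lt r y r ↔ β .gt r y r) :=
  h.reflect.xq_q_lt_ne_xq_q_gt

theorem ar_r_gt_ne_ry_r_gt (h : IsThetaPattern G χ p β) : ¬(β .gt a r r ↔ β .gt r y r) :=
  h.reflect.qb_q_gt_ne_xq_q_gt

theorem ar_r_lt_ne_ry_r_lt (h : IsThetaPattern G χ p β) : ¬(β .lt a r r ↔ β .lt r y r) :=
  h.reflect.qb_q_lt_ne_xq_q_lt

theorem xq_a_ne_qr_a (h : IsThetaPattern G χ p β) : ¬(β .eq x q a ↔ β .eq q r a) := by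
  simpa [h.eq_iff, h.color, h.color_iff] using h.separated x a 0 x q 0 q r 0

theorem xa_q_eq_qr_a (h : IsThetaPattern G χ p β) : β .eq x a q ↔ β .eq q r a := by
  have h₁ : ¬(β .eq x q a ↔ β .eq r y q) ∨ ¬(β .eq x a q ↔ β .eq r y q) := by
    simpa [h.eq_iff, h.color, h.color_iff] using h.separated x a 0 x q 0 r y 0
  have h₂ : ¬(β .eq r y q ↔ β .eq q r a) ∨ ¬(β .eq r y q ↔ β .eq a r q) := by
    simpa [h.eq_iff, h.color, h.color_iff] using h.separated r y 0 a r 0 q r 0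
  have h₃ : ¬(β .eq x a q ↔ β .eq a r q) := by
    simpa [h.eq_iff, h.color, h.color_iff] using h.separated x a 0 x q 0 a r 0
  have h₄ := h.xq_a_ne_qr_a
  grind

theorem ar_q_ne_qr_a (h : IsThetaPattern G χ p β) : ¬(β .eq a r q ↔ β .eq q r a) := by
  rw [← h.xa_q_eq_qr_a]
  have h₁ : ¬(β .eq a r q ↔ β .eq x a q) := by
    simpa [h.eq_iff, h.color, h.color_iff] using h.separated x q 0 a r 0 x a 0
  grind

theorem qb_r_ne_qr_b (h : IsThetaPattern G χ p β) : ¬(β .eq q b r ↔ β .eq q r b) :=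
  h.reflect.ar_q_ne_qr_a

theorem qb_r_gt_eq_or_qr_q_lt_eq (h : IsThetaPattern G χ p β) :
    (β .gt q b r ↔ β .eq q r b) ∨ (β .lt q r q ↔ β .lt x q q) := by
  have h₁ : ¬(β .eq q b r ↔ β .gt q b r) ∨ ¬(β .lt q b q ↔ β .lt q r q) := by
    simpa [h.eq_iff, h.color] using h.separated q b 0 q r 0 q b 1
  have h₂ := h.qb_q_lt_ne_xq_q_lt
  have h₃ := h.qb_r_ne_qr_b
  grind

theorem qb_r_lt_eq_or_qr_q_gt_eq (h : IsThetaPattern G χ p β) :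
    (β .lt q b r ↔ β .eq q r b) ∨ (β .gt q r q ↔ β .gt x q q) :=
  h.reverse.qb_r_gt_eq_or_qr_q_lt_eq

theorem ar_q_gt_eq_or_qr_r_lt_eq (h : IsThetaPattern G χ p β) :
    (β .gt a r q ↔ β .eq q r a) ∨ (β .lt q r r ↔ β .lt r y r) :=
  h.reflect.qb_r_gt_eq_or_qr_q_lt_eq

theorem qr_q_lt_ne_gt_or_qr_r_lt_ne_gt (h : IsThetaPattern G χ p β) :
    ¬(β .lt q r q ↔ β .gt q r q) ∨ ¬(β .lt q r r ↔ β .gt q r r) := by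
  simpa [h.eq_iff, h.color] using h.separated q r 0 q r 1 q r 2

theorem ar_q_gt_ne_qr_a_of_xq_r_lt (h : IsThetaPattern G χ p β) (hα : β .lt x q r ↔ β .eq x q r) :
    ¬(β .gt a r q ↔ β .eq q r a) := by
  rw [← h.xa_q_eq_qr_a]
  have h₁ : ¬(β .gt a r q ↔ β .eq x a q) ∨ ¬(β .lt x q r ↔ β .eq x q r) := by
    simpa [h.eq_iff, h.color, h.color_iff] using h.separated x q 0 a r 1 x a 0
  grind

theorem qr_q_gt_eq_xq_q_lt_of_xq_r_lt (h : IsThetaPattern G χ p β)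
    (hα : β .lt x q r ↔ β .eq x q r) : β .gt q r q ↔ β .lt x q q := by
  have h₁ : ¬(β .gt q r q ↔ β .gt x q q) ∨ ¬(β .lt x q r ↔ β .eq x q r) := by
    simpa [h.eq_iff, h.color] using h.separated x q 0 q r 1 x q 1
  have h₂ := h.xq_q_lt_ne_xq_q_gt
  grind

theorem qr_r_lt_eq_ry_r_lt_of_xq_r_lt (h : IsThetaPattern G χ p β)
    (hα : β .lt x q r ↔ β .eq x q r) : β .lt q r r ↔ β .lt r y r := by
  grind [h.ar_q_gt_ne_qr_a_of_xq_r_lt hα, h.ar_q_gt_eq_or_qr_r_lt_eq]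

theorem ry_q_gt_ne_ry_q_of_xq_r_lt (h : IsThetaPattern G χ p β) (hα : β .lt x q r ↔ β .eq x q r) :
    ¬(β .gt r y q ↔ β .eq r y q) := by
  intro hβ
  have h₁ : β .lt q r r ↔ β .gt r y r := h.reflect.reverse.qr_q_gt_eq_xq_q_lt_of_xq_r_lt hβ
  grind [h.qr_r_lt_eq_ry_r_lt_of_xq_r_lt hα, h.ry_r_lt_ne_ry_r_gt]

theorem ry_q_lt_ne_ry_q_of_xq_r_lt (h : IsThetaPattern G χ p β) (hα : β .lt x q r ↔ β .eq x q r) :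
    ¬(β .lt r y q ↔ β .eq r y q) := by
  intro hβ
  have h₁ : β .gt q r r ↔ β .lt r y r := h.reflect.qr_q_gt_eq_xq_q_lt_of_xq_r_lt hβ
  have h₂ : β .lt q r q ↔ β .lt x q q := h.reflect.qr_r_lt_eq_ry_r_lt_of_xq_r_lt hβ
  grind [h.qr_r_lt_eq_ry_r_lt_of_xq_r_lt hα, h.qr_q_gt_eq_xq_q_lt_of_xq_r_lt hα,
    h.qr_q_lt_ne_gt_or_qr_r_lt_ne_gt]

theorem ry_q_ne_xq_q_lt_of_xq_r_lt (h : IsThetaPattern G χ p β) (hα : β .lt x q r ↔ β .eq x q r) :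
    ¬(β .eq r y q ↔ β .lt x q q) := by
  have h₁ : ¬(β .eq r y q ↔ β .lt x q q) ∨ ¬(β .eq x q r ↔ β .lt x q r) ∨
      ¬(β .gt x q q ↔ β .gt r y q) := by
    simpa [h.eq_iff, h.color] using h.separated x q 1 r y 1 x q 0
  grind [h.ry_q_gt_ne_ry_q_of_xq_r_lt hα, h.xq_q_lt_ne_xq_q_gt]

theorem xq_r_gt_ne_xq_r_of_xq_r_lt (h : IsThetaPattern G χ p β) (hα : β .lt x q r ↔ β .eq x q r) :
    ¬(β .gt x q r ↔ β .eq x q r) := by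
  intro hα'
  have h₁ : ¬(β .eq r y q ↔ β .gt x q q) := h.reverse.ry_q_ne_xq_q_lt_of_xq_r_lt hα'
  grind [h.ry_q_ne_xq_q_lt_of_xq_r_lt hα, h.xq_q_lt_ne_xq_q_gt]

theorem qr_a_eq_ry_q_of_xq_r_lt (h : IsThetaPattern G χ p β) (hα : β .lt x q r ↔ β .eq x q r) :
    β .eq q r a ↔ β .eq r y q := by
  have h₁ : ¬(β .eq x q a ↔ β .eq r y q) ∨ ¬(β .eq x a q ↔ β .gt r y q) ∨
      ¬(β .eq x q r ↔ β .lt x q r) := by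
    simpa [h.eq_iff, h.color, h.color_iff] using h.separated x a 0 x q 0 r y 1
  grind [h.ry_q_gt_ne_ry_q_of_xq_r_lt hα, h.xa_q_eq_qr_a, h.xq_a_ne_qr_a]

theorem xq_r_ne_ry_r_lt_of_xq_r_lt (h : IsThetaPattern G χ p β) (hα : β .lt x q r ↔ β .eq x q r) :
    ¬(β .eq x q r ↔ β .lt r y r) := by
  have h₁ : ¬(β .gt x q r ↔ β .gt r y r) ∨ ¬(β .lt r y q ↔ β .gt r y q) ∨
      ¬(β .lt r y r ↔ β .lt x q r) := by
    simpa [h.eq_iff, h.color] using h.separated r y 0 x q 1 r y 2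
  grind [h.ry_q_gt_ne_ry_q_of_xq_r_lt hα, h.ry_q_lt_ne_ry_q_of_xq_r_lt hα,
    h.xq_r_gt_ne_xq_r_of_xq_r_lt hα, h.ry_r_lt_ne_ry_r_gt]

theorem ar_q_lt_eq_qr_a_of_xq_r_lt (h : IsThetaPattern G χ p β) (hα : β .lt x q r ↔ β .eq x q r) :
    β .lt a r q ↔ β .eq q r a := by
  have h₁ : ¬(β .gt x q r ↔ β .gt a r r) ∨ ¬(β .lt a r q ↔ β .gt a r q) ∨
      ¬(β .lt a r r ↔ β .lt x q r) := by
    simpa [h.eq_iff, h.color] using h.separated a r 0 x q 1 a r 2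
  grind [h.ar_q_gt_ne_qr_a_of_xq_r_lt hα, h.xq_r_ne_ry_r_lt_of_xq_r_lt hα,
    h.xq_r_gt_ne_xq_r_of_xq_r_lt hα, h.ry_r_lt_ne_ry_r_gt, h.ar_r_gt_ne_ry_r_gt,
    h.ar_r_lt_ne_ry_r_lt]

theorem qr_r_gt_eq_ry_r_lt_of_xq_r_lt (h : IsThetaPattern G χ p β)
    (hα : β .lt x q r ↔ β .eq x q r) : β .gt q r r ↔ β .lt r y r := by
  have h₁ : ¬(β .eq x q r ↔ β .gt q r r) ∨ ¬(β .eq x a q ↔ β .lt a r q) ∨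
      ¬(β .eq x q r ↔ β .lt a r r) := by
    simpa [h.eq_iff, h.color, h.color_iff] using h.separated x a 0 a r 0 q r 1
  grind [h.xa_q_eq_qr_a, h.ar_q_lt_eq_qr_a_of_xq_r_lt hα, h.xq_r_ne_ry_r_lt_of_xq_r_lt hα,
    h.ar_r_lt_ne_ry_r_lt]

theorem xq_r_lt_ne_xq_r (h : IsThetaPattern G χ p β) : ¬(β .lt x q r ↔ β .eq x q r) := by
  intro hα
  have h₁ : ¬(β .gt a r q ↔ β .gt q b q) ∨ ¬(β .lt q b r ↔ β .gt q b r) ∨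
      ¬(β .lt q b q ↔ β .lt a r q) := by
    simpa [h.eq_iff, h.color] using h.separated q b 0 a r 1 q b 2
  grind [h.qr_a_eq_ry_q_of_xq_r_lt hα, h.ry_q_ne_xq_q_lt_of_xq_r_lt hα,
    h.ar_q_lt_eq_qr_a_of_xq_r_lt hα, h.ar_q_gt_ne_qr_a_of_xq_r_lt hα,
    h.qr_q_gt_eq_xq_q_lt_of_xq_r_lt hα, h.qr_r_lt_eq_ry_r_lt_of_xq_r_lt hα,
    h.qr_r_gt_eq_ry_r_lt_of_xq_r_lt hα, h.qr_q_lt_ne_gt_or_qr_r_lt_ne_gt,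
    h.qb_r_gt_eq_or_qr_q_lt_eq, h.qb_r_lt_eq_or_qr_q_gt_eq, h.xq_q_lt_ne_xq_q_gt,
    h.qb_q_lt_ne_xq_q_lt, h.qb_q_gt_ne_xq_q_gt]

theorem xq_r_gt_ne_xq_r (h : IsThetaPattern G χ p β) : ¬(β .gt x q r ↔ β .eq x q r) :=
  h.reverse.xq_r_lt_ne_xq_r

theorem ry_q_lt_ne_ry_q (h : IsThetaPattern G χ p β) : ¬(β .lt r y q ↔ β .eq r y q) :=
  h.reflect.xq_r_lt_ne_xq_r

theorem qb_r_gt_eq_qr_b_of_ry_q_eq (h : IsThetaPattern G χ p β) (hβ : β .eq r y q ↔ β .lt x q q) :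
    β .gt q b r ↔ β .eq q r b := by
  have h₁ : ¬(β .eq r y q ↔ β .gt q b q) ∨ ¬(β .eq q b r ↔ β .gt q b r) ∨
      ¬(β .lt q b q ↔ β .lt r y q) := by
    simpa [h.eq_iff, h.color, h.color_iff] using h.separated q b 0 r y 0 q b 1
  grind [h.ry_q_lt_ne_ry_q, h.qb_r_ne_qr_b, h.qb_q_lt_ne_xq_q_lt, h.qb_q_gt_ne_xq_q_gt,
    h.xq_q_lt_ne_xq_q_gt]

theorem qb_r_lt_eq_qr_b_of_ry_q_ne (h : IsThetaPattern G χ p β)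
    (hβ : ¬(β .eq r y q ↔ β .lt x q q)) : β .lt q b r ↔ β .eq q r b :=
  h.reverse.qb_r_gt_eq_qr_b_of_ry_q_eq <|
    show β .eq r y q ↔ β .gt x q q by grind [h.xq_q_lt_ne_xq_q_gt]

theorem ar_q_gt_eq_qr_a_of_xq_r_eq (h : IsThetaPattern G χ p β) (hα : β .eq x q r ↔ β .lt r y r) :
    β .gt a r q ↔ β .eq q r a :=
  h.reflect.qb_r_gt_eq_qr_b_of_ry_q_eq hα

theorem ar_q_lt_eq_qr_a_of_xq_r_ne (h : IsThetaPattern G χ p β)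
    (hα : ¬(β .eq x q r ↔ β .lt r y r)) : β .lt a r q ↔ β .eq q r a :=
  h.reflect.qb_r_lt_eq_qr_b_of_ry_q_ne hα

theorem qr_q_gt_eq_xq_q_gt_of_xq_r_eq_qr_b (h : IsThetaPattern G χ p β)
    (hα : β .eq x q r ↔ β .eq q r b) : β .gt q r q ↔ β .gt x q q := by
  have h₁ : ¬(β .gt q b q ↔ β .gt q r q) ∨ ¬(β .eq x q r ↔ β .eq q r b) ∨
      ¬(β .lt x q r ↔ β .eq q b r) := by
    simpa [h.eq_iff, h.color, h.color_iff] using h.separated x q 0 q b 1 q r 1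
  grind [h.xq_r_lt_ne_xq_r, h.qb_r_ne_qr_b, h.qb_q_gt_ne_xq_q_gt]

theorem qb_r_lt_ne_qr_b_of_xq_r_eq_qr_b (h : IsThetaPattern G χ p β)
    (hα : β .eq x q r ↔ β .eq q r b) : ¬(β .lt q b r ↔ β .eq q r b) := by
  have h₁ : (¬(β .gt x q q ↔ β .gt q r q) ∨ ¬(β .eq x q r ↔ β .eq q r b)) ∨
      ¬(β .lt q b r ↔ β .eq x q r) := by
    simpa [h.eq_iff, h.color, h.color_iff] using h.separated q b 0 x q 1 q r 1
  grind [h.qr_q_gt_eq_xq_q_gt_of_xq_r_eq_qr_b hα]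

theorem xq_r_ne_qr_b (h : IsThetaPattern G χ p β) : ¬(β .eq x q r ↔ β .eq q r b) := by
  intro hα
  have h₁ : ¬(β .gt q b r ↔ β .eq q r b) := h.reverse.qb_r_lt_ne_qr_b_of_xq_r_eq_qr_b hα
  grind [h.qb_r_lt_ne_qr_b_of_xq_r_eq_qr_b hα, h.qb_r_gt_eq_qr_b_of_ry_q_eq,
    h.qb_r_lt_eq_qr_b_of_ry_q_ne]

theorem ry_q_ne_qr_a (h : IsThetaPattern G χ p β) : ¬(β .eq r y q ↔ β .eq q r a) :=
  h.reflect.xq_r_ne_qr_b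

theorem qr_r_gt_eq_ry_r_lt_of_xq_r_ne (h : IsThetaPattern G χ p β)
    (hα : ¬(β .eq x q r ↔ β .lt r y r)) : β .gt q r r ↔ β .lt r y r := by
  have h₁ : ¬(β .eq x q r ↔ β .gt q r r) ∨ ¬(β .eq x a q ↔ β .lt a r q) ∨
      ¬(β .eq x q r ↔ β .lt a r r) := by
    simpa [h.eq_iff, h.color, h.color_iff] using h.separated x a 0 a r 0 q r 1
  grind [h.xa_q_eq_qr_a, h.ar_q_lt_eq_qr_a_of_xq_r_ne hα, h.ar_r_lt_ne_ry_r_lt]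

theorem qr_r_lt_ne_ry_r_lt_of_xq_r_eq (h : IsThetaPattern G χ p β)
    (hα : β .eq x q r ↔ β .lt r y r) : ¬(β .lt q r r ↔ β .lt r y r) := by
  have h₁ : ¬(β .eq x q r ↔ β .gt r y r) → (β .lt q r r ↔ β .gt r y r) :=
    h.reverse.qr_r_gt_eq_ry_r_lt_of_xq_r_ne
  grind [h.ry_r_lt_ne_ry_r_gt]

theorem qr_q_lt_ne_xq_q_lt_of_ry_q_eq (h : IsThetaPattern G χ p β)
    (hβ : β .eq r y q ↔ β .lt x q q) : ¬(β .lt q r q ↔ β .lt x q q) :=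
  h.reflect.qr_r_lt_ne_ry_r_lt_of_xq_r_eq hβ

theorem qr_q_gt_ne_xq_q_lt_of_xq_r_eq (h : IsThetaPattern G χ p β) (hβ : β .eq r y q ↔ β .lt x q q)
    (hα : β .eq x q r ↔ β .lt r y r) : ¬(β .gt q r q ↔ β .lt x q q) := by
  intro hq
  have h₂ : ¬(β .gt a r q ↔ β .gt x q q) ∨ ¬(β .lt x q r ↔ β .gt x q r) ∨
      ¬(β .lt x q q ↔ β .lt a r q) := by
    simpa [h.eq_iff, h.color, h.color_iff] using h.separated x q 0 a r 1 x q 2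
  have h₃ : ¬(β .eq a r q ↔ β .gt q r q) ∨ ¬(β .lt a r q ↔ β .lt q r q) ∨
      ¬(β .lt a r r ↔ β .lt q r r) := by
    simpa [h.eq_iff, h.color, h.color_iff] using h.separated a r 0 q r 0 q r 1
  have ha : ¬(β .lt a r q ↔ β .eq q r a) := by
    grind [h.qr_r_lt_ne_ry_r_lt_of_xq_r_eq hα, h.qr_q_lt_ne_xq_q_lt_of_ry_q_eq hβ, h.ry_q_ne_qr_a,
      h.ar_r_lt_ne_ry_r_lt, h.ar_q_ne_qr_a]
  grind [h.xq_r_lt_ne_xq_r, h.xq_r_gt_ne_xq_r, h.ar_q_gt_eq_qr_a_of_xq_r_eq hα, h.ry_q_ne_qr_a,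
    h.xq_q_lt_ne_xq_q_gt]

theorem qr_q_gt_ne_xq_q_lt_of_xq_r_ne (h : IsThetaPattern G χ p β) (hβ : β .eq r y q ↔ β .lt x q q)
    (hα : ¬(β .eq x q r ↔ β .lt r y r)) : ¬(β .gt q r q ↔ β .lt x q q) := by
  intro hq
  have h₁ : ¬(β .eq a r q ↔ β .gt q r q) ∨ ¬(β .lt a r q ↔ β .lt q r q) ∨
      ¬(β .lt a r r ↔ β .lt q r r) := by
    simpa [h.eq_iff, h.color] using h.separated a r 0 q r 0 q r 1
  have h₂ : ¬(β .eq r y q ↔ β .gt q r q) ∨ ¬(β .lt r y q ↔ β .lt q r q) ∨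
      ¬(β .lt r y r ↔ β .lt q r r) := by
    simpa [h.eq_iff, h.color] using h.separated r y 0 q r 0 q r 1
  have hr : β .lt q r r ↔ β .lt r y r := by
    grind [h.qr_q_lt_ne_xq_q_lt_of_ry_q_eq hβ, h.ar_q_lt_eq_qr_a_of_xq_r_ne hα, h.ry_q_ne_qr_a,
      h.ar_r_lt_ne_ry_r_lt, h.ar_q_ne_qr_a]
  grind [h.qr_q_lt_ne_xq_q_lt_of_ry_q_eq hβ, h.ry_q_lt_ne_ry_q]

theorem ry_q_ne_xq_q_lt (h : IsThetaPattern G χ p β) : ¬(β .eq r y q ↔ β .lt x q q) := by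
  intro hβ
  have h₁ := h.qr_q_lt_ne_gt_or_qr_r_lt_ne_gt
  have h₂ := h.qr_q_lt_ne_xq_q_lt_of_ry_q_eq hβ
  by_cases hα : β .eq x q r ↔ β .lt r y r
  · have hr : ¬(β .gt q r r ↔ β .lt r y r) := h.reflect.qr_q_gt_ne_xq_q_lt_of_xq_r_eq hα hβ
    grind [h.qr_q_gt_ne_xq_q_lt_of_xq_r_eq hβ hα, h.qr_r_lt_ne_ry_r_lt_of_xq_r_eq hα]
  · have hr : (β .eq x q r ↔ β .gt r y r) → ¬(β .eq r y q ↔ β .gt x q q) →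
        ¬(β .lt q r r ↔ β .gt r y r) :=
      h.reflect.reverse.qr_q_gt_ne_xq_q_lt_of_xq_r_ne
    grind [h.qr_q_gt_ne_xq_q_lt_of_xq_r_ne hβ hα, h.qr_r_gt_eq_ry_r_lt_of_xq_r_ne hα,
      h.ry_r_lt_ne_ry_r_gt, h.xq_q_lt_ne_xq_q_gt]

end IsThetaPattern

theorem not_isThetaPattern {V : Type*} {G : SimpleGraph V} {χ : Sym2 V → V → Prop}
    (p : Domino → Fin 3 → V) (β : Pattern) : ¬ IsThetaPattern G χ p β := by
  intro h
  have h₁ : ¬(β .eq r y q ↔ β .gt x q q) := h.reverse.ry_q_ne_xq_q_lt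
  grind [h.ry_q_ne_xq_q_lt, h.xq_q_lt_ne_xq_q_gt]

end ThetaPattern

open Finset Domino

section Ramsey

/-- A number of points, not the least one, for which every coloring of the pairs with `m` colors
has a monochromatic triple. -/
def tripleRamsey : ℕ → ℕ
  | 0 => 2
  | m + 1 => (m + 1) * tripleRamsey m + 2

theorem exists_monochromatic_triple_of_mem {α κ : Type*} [LinearOrder α]
    (c : α → α → κ) (K : Finset κ) (S : Finset α) (hS : tripleRamsey #K ≤ #S)
    (hc : ∀ i ∈ S, ∀ j ∈ S, i < j → c i j ∈ K) :
    ∃ i j k, i < j ∧ j < k ∧ c i j = c i k ∧ c i j = c j k := by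
  classical
  induction hm : #K generalizing K S with
  | zero =>
    obtain ⟨i, hi, j, hj, hij⟩ := one_lt_card_iff_nontrivial.1
      (show 1 < #S by rw [hm] at hS; exact hS) |>.exists_lt
    simpa [card_eq_zero.1 hm] using hc i hi j hj hij
  | succ m ih =>
    rw [hm, tripleRamsey] at hS
    have hne : S.Nonempty := card_pos.1 (by omega)
    set i := S.min' hne
    have hiS : i ∈ S := S.min'_mem hne
    have hi : ∀ j ∈ S.erase i, i < j := fun j => S.min'_lt_of_mem_erase_min' hne
    obtain ⟨γ, hγ, hfib⟩ := exists_lt_card_fiber_of_mul_lt_card_of_maps_to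
      (s := S.erase i) (t := K) (f := c i) (n := tripleRamsey m)
      (fun j hj => hc i hiS j (mem_of_mem_erase hj) (hi j hj))
      (by rw [card_erase_of_mem hiS, hm]; omega)
    by_cases hex : ∃ j ∈ (S.erase i).filter (c i · = γ), ∃ k ∈ (S.erase i).filter (c i · = γ),
        j < k ∧ c j k = γ
    · obtain ⟨j, hj, k, hk, hjk, hcjk⟩ := hex
      simp only [mem_filter] at hj hk
      exact ⟨i, j, k, hi j hj.1, hjk, hj.2.trans hk.2.symm, hj.2.trans hcjk.symm⟩
    · push Not at hex
      have hK : #(K.erase γ) = m := by rw [card_erase_of_mem hγ, hm]; rfl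
      refine ih (K.erase γ) _ (hK ▸ hfib.le) (fun j hj k hk hjk => ?_) hK
      refine mem_erase.2 ⟨hex j hj k hk hjk, hc j ?_ k ?_ hjk⟩ <;> simp_all

theorem exists_strictMono_monochromatic {α κ : Type*} [LinearOrder α] [Fintype α] [Fintype κ]
    (c : α → α → κ) (h : tripleRamsey (Fintype.card κ) ≤ Fintype.card α) :
    ∃ s : Fin 3 → α, StrictMono s ∧ ∃ γ, ∀ i j, i < j → c (s i) (s j) = γ := by
  classical
  obtain ⟨i, j, k, hij, hjk, hik, hjk'⟩ :=
    exists_monochromatic_triple_of_mem c univ univ h (by simp)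
  refine ⟨![i, j, k], by simp [Fin.strictMono_iff_lt_succ, Fin.forall_fin_two, *], c i j, ?_⟩
  simp [Fin.forall_fin_succ, ← hik, ← hjk']

end Ramsey

section Theta

variable {V : Type*} {G : SimpleGraph V} {χ : Sym2 V → V → Prop}

theorem exists_strictMono_forall_color_eq {ι : Type*} [LinearOrder ι] [Fintype ι]
    (χ : Sym2 V → V → Prop) (p : Domino → ι → V) (hp : ∀ k, ¬moving k → ∀ i j, p k i = p k j)
    (hι : tripleRamsey (Fintype.card (Pattern × (Domino → Domino → Domino → Prop))) ≤
      Fintype.card ι) :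
    ∃ s : Fin 3 → ι, StrictMono s ∧ ∃ β : Pattern, ∀ k l i m j,
      χ s(p k (s i), p l (s i)) (p m (s j)) = β (relOrder k l m i j) k l m := by
  -- The last component makes the colors within a single domino agree at the third index as well.
  obtain ⟨s, hs, ⟨β, δ⟩, hβ⟩ := exists_strictMono_monochromatic
    (fun i j : ι => ((fun o k l m => match o with
      | .lt => χ s(p k i, p l i) (p m j)
      | .gt => χ s(p k j, p l j) (p m i)
      | .eq => χ s(p k i, p l i) (p m i),
      fun k l m => χ s(p k j, p l j) (p m j)) : Pattern × (Domino → Domino → Domino → Prop))) hι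
  simp only [Prod.mk.injEq, funext_iff] at hβ
  have hlt {i j} (h : i < j) k l m : χ s(p k (s i), p l (s i)) (p m (s j)) = β .lt k l m :=
    (hβ i j h).1 .lt k l m
  have hgt {i j} (h : j < i) k l m : χ s(p k (s i), p l (s i)) (p m (s j)) = β .gt k l m :=
    (hβ j i h).1 .gt k l m
  have heq i k l m : χ s(p k (s i), p l (s i)) (p m (s i)) = β .eq k l m := by
    have h₀₂ := hβ 0 2 (by decide)
    fin_cases i
    · exact h₀₂.1 .eq k l m
    · exact (hβ 1 2 (by decide)).1 .eq k l m
    · exact ((h₀₂.2 k l m).trans ((hβ 0 1 (by decide)).2 k l m).symm).trans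
        ((hβ 1 2 (by decide)).1 .eq k l m)
  refine ⟨s, hs, β, fun k l i m j => ?_⟩
  rw [relOrder]
  split_ifs with h
  · rcases lt_trichotomy i j with hij | rfl | hij
    · rw [(cmp_eq_lt_iff _ _).2 hij, hlt hij]
    · rw [cmp_self_eq_eq, heq]
    · rw [(cmp_eq_gt_iff _ _).2 hij, hgt hij]
  · rcases not_and_or.1 h with h | h
    · push Not at h
      rw [hp k (by simp [h]) _ (s j), hp l (by simp [h]) _ (s j), heq]
    · rw [hp m h _ (s i), heq]

/-- The colors that the edges of the path `x q r y` give to the vertices of the path off them. -/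
def pathColors (χ : Sym2 V → V → Prop) (x y q r : V) : PathColors :=
  (χ s(q, r) x, χ s(q, r) y, χ s(x, q) r, χ s(x, q) y, χ s(r, y) q, χ s(r, y) x)

/-- `q r` is the middle edge of a path `x q r y` with colors `C`. In a separating graph `x ≠ y`
holds automatically, as there are no triangles. -/
structure IsMiddle (G : SimpleGraph V) (χ : Sym2 V → V → Prop) (x y : V)
    (C : PathColors) (q r : V) : Prop where
  adj_left : G.Adj x q
  adj : G.Adj q r
  adj_right : G.Adj r y
  left_ne : q ≠ y
  right_ne : r ≠ x
  colors : pathColors χ x y q r = C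

variable {x y a b : V} {C : PathColors}

theorem IsMiddle.eq_or_eq_of_cycle (hχ : IsSeparating G χ) {q q' r r' : V}
    (h₁ : IsMiddle G χ x y C q r) (h₂ : IsMiddle G χ x y C q r')
    (h₃ : IsMiddle G χ x y C q' r) (h₄ : IsMiddle G χ x y C q' r') : q = q' ∨ r = r' := by
  by_contra! ⟨hq, hr⟩
  have hx := hχ.not_iff_or_not_iff_of_path h₁.adj_left h₁.adj h₃.adj.symm h₁.right_ne.symm hq
  have hx' := hχ.not_iff_or_not_iff_of_path h₂.adj_left h₂.adj h₄.adj.symm h₂.right_ne.symm hq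
  have hy := hχ.not_iff_or_not_iff_of_path h₁.adj_right.symm h₁.adj.symm h₂.adj h₁.left_ne.symm hr
  have hy' := hχ.not_iff_or_not_iff_of_path h₃.adj_right.symm h₃.adj.symm h₄.adj h₃.left_ne.symm hr
  have hqr := hχ.not_iff_or_not_iff_of_path h₃.adj h₁.adj.symm h₂.adj hq.symm hr
  have hC₂ := h₁.colors.trans h₂.colors.symm
  have hC₃ := h₁.colors.trans h₃.colors.symm
  have hC₄ := h₁.colors.trans h₄.colors.symm
  simp only [pathColors, Prod.mk.injEq, eq_iff_iff] at hC₂ hC₃ hC₄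
  simp only [Sym2.eq_swap (a := r), Sym2.eq_swap (a := r')] at *
  grind

/-- A family of distinct dominoes, indexed by `ι`, that share `x`, `a`, `b`, `y` and whose paths
`x a r y`, `x q r y` and `x q b y` all have colors `C`. -/
structure IsTheta {ι : Type*} (G : SimpleGraph V) (χ : Sym2 V → V → Prop) (x a b y : V)
    (C : PathColors) (q r : ι → V) : Prop where
  middle_left (i : ι) : IsMiddle G χ x y C a (r i)
  middle (i : ι) : IsMiddle G χ x y C (q i) (r i)
  middle_right (i : ι) : IsMiddle G χ x y C (q i) b
  ne_left (i : ι) : q i ≠ a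
  ne_right (i : ι) : r i ≠ b
  injective : Function.Injective fun i => (q i, r i)

/-- The vertices of the `i`-th domino. -/
def dominoVertex {ι : Type*} (x a b y : V) (q r : ι → V) : Domino → ι → V
  | .x, _ => x
  | .a, _ => a
  | .q, i => q i
  | .r, i => r i
  | .b, _ => b
  | .y, _ => y

namespace IsTheta

variable {ι : Type*} {q r : ι → V}

theorem injective_left (h : IsTheta G χ x a b y C q r) (hχ : IsSeparating G χ) :
    Function.Injective q := fun i j hij =>
  h.injective <| Prod.ext hij <| ((h.middle_left i).eq_or_eq_of_cycle hχ (h.middle_left j)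
    (h.middle i) (hij ▸ h.middle j)).resolve_left (h.ne_left i).symm

theorem injective_right (h : IsTheta G χ x a b y C q r) (hχ : IsSeparating G χ) :
    Function.Injective r := fun i j hij =>
  h.injective <| Prod.ext (((h.middle i).eq_or_eq_of_cycle hχ (h.middle_right i)
    (hij ▸ h.middle j) (h.middle_right j)).resolve_right (h.ne_right i)) hij

theorem left_ne_right (h : IsTheta G χ x a b y C q r) (hχ : IsSeparating G χ) (i j : ι) :
    q i ≠ r j := fun hij =>
  hχ.not_triangle (h.middle_left j).adj_left (h.middle_left j).adj
    (hij ▸ (h.middle i).adj_left.symm)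

theorem dominoVertex_eq_iff (h : IsTheta G χ x a b y C q r) (hχ : IsSeparating G χ)
    {k l : Domino} {i j : ι} : dominoVertex x a b y q r k i = dominoVertex x a b y q r l j ↔
      k = l ∧ (moving k → i = j) := by
  have hxy : x ≠ y := by
    rintro rfl
    exact hχ.not_triangle (h.middle i).adj_left (h.middle i).adj (h.middle i).adj_right
  have hab : a ≠ b := by
    rintro rfl
    exact hχ.not_triangle (h.middle i).adj (h.middle_left i).adj.symm (h.middle_right i).adj.symm
  have hq := (h.injective_left hχ).eq_iff (a := i) (b := j)
  have hr := (h.injective_right hχ).eq_iff (a := i) (b := j)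
  have hqr := h.left_ne_right hχ i j
  have hrq := h.left_ne_right hχ j i
  have hxa := (h.middle_left i).adj_left.ne
  have hay := (h.middle_left i).left_ne
  have hbx := (h.middle_right i).right_ne
  have hby := (h.middle_right i).adj_right.ne
  have har m := (h.middle_left m).adj.ne
  have hqb m := (h.middle_right m).adj.ne
  have hxq m := (h.middle m).adj_left.ne
  have hqy m := (h.middle m).left_ne
  have hry m := (h.middle m).adj_right.ne
  have hrx m := (h.middle m).right_ne
  have hqa := h.ne_left
  have hrb := h.ne_right
  cases k <;> cases l <;> simp [dominoVertex, moving] <;> grind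

theorem dominoVertex_adj (h : IsTheta G χ x a b y C q r) {k l : Domino} (i : ι)
    (hkl : arrow k l) : G.Adj (dominoVertex x a b y q r k i) (dominoVertex x a b y q r l i) := by
  have hl := h.middle_left i
  have hm := h.middle i
  have hr := h.middle_right i
  cases k <;> cases l <;> simp [arrow] at hkl <;>
    simp [dominoVertex, hl.adj_left, hl.adj, hm.adj_left, hm.adj, hm.adj_right, hr.adj,
      hr.adj_right]

theorem isThetaPattern (h : IsTheta G χ x a b y C q r) (hχ : IsSeparating G χ) {s : Fin 3 → ι}
    (hs : Function.Injective s) {β : Pattern}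
    (hβ : ∀ k l i m j, χ s(dominoVertex x a b y q r k (s i), dominoVertex x a b y q r l (s i))
      (dominoVertex x a b y q r m (s j)) = β (relOrder k l m i j) k l m) :
    IsThetaPattern G χ (fun k i => dominoVertex x a b y q r k (s i)) β := by
  have hcolors k l : β.pathColors k l = pathColors χ x y (dominoVertex x a b y q r k (s 0))
      (dominoVertex x a b y q r l (s 0)) := by
    have h₀ k l m := hβ k l 0 m 0
    simp only [relOrder, cmp_self_eq_eq, ite_self] at h₀
    simp only [Pattern.pathColors, ← h₀]
    rfl
  have har := (hcolors .a .r).trans (h.middle_left (s 0)).colors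
  have hqr := (hcolors .q .r).trans (h.middle (s 0)).colors
  have hqb := (hcolors .q .b).trans (h.middle_right (s 0)).colors
  exact ⟨hχ, by simp [h.dominoVertex_eq_iff hχ, hs.eq_iff], fun i => h.dominoVertex_adj (s i), hβ,
    har.trans hqr.symm, hqb.trans hqr.symm⟩

end IsTheta

/-- A strict upper bound for the number of dominoes in a family as in `IsTheta`. -/
def thetaBound : ℕ :=
  tripleRamsey (Fintype.card (Pattern × (Domino → Domino → Domino → Prop)))

theorem IsTheta.card_lt_thetaBound {ι : Type*} [Fintype ι] [LinearOrder ι] {q r : ι → V}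
    (h : IsTheta G χ x a b y C q r) (hχ : IsSeparating G χ) : Fintype.card ι < thetaBound := by
  by_contra! hι
  obtain ⟨s, hs, β, hβ⟩ := exists_strictMono_forall_color_eq χ (dominoVertex x a b y q r)
    (fun k hk i j => by cases k <;> simp_all [dominoVertex, moving]) hι
  exact not_isThetaPattern _ β (h.isThetaPattern hχ hs.injective hβ)

theorem card_middlePaths_lt_thetaBound (hχ : IsSeparating G χ) (P : Finset (V × V))
    (hP : ∀ z ∈ P, IsMiddle G χ x y C z.1 z.2 ∧ IsMiddle G χ x y C a z.2 ∧
      IsMiddle G χ x y C z.1 b ∧ z.1 ≠ a ∧ z.2 ≠ b) : #P < thetaBound := by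
  let e (i : Fin #P) := P.equivFin.symm i
  have he i := hP (e i) (e i).2
  have h : IsTheta G χ x a b y C (fun i => (e i).1.1) (fun i => (e i).1.2) :=
    ⟨fun i => (he i).2.1, fun i => (he i).1, fun i => (he i).2.2.1, fun i => (he i).2.2.2.1,
      fun i => (he i).2.2.2.2, Subtype.val_injective.comp P.equivFin.symm.injective⟩
  simpa using h.card_lt_thetaBound hχ

end Theta

section Counting

theorem sum_pow_three_le_of_pow_three_le {ι : Type*} (s : Finset ι) {t a b c : ι → ℝ}
    (ha : ∀ i ∈ s, 0 ≤ a i) (hb : ∀ i ∈ s, 0 ≤ b i) (hc : ∀ i ∈ s, 0 ≤ c i)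
    (ht : ∀ i ∈ s, t i ^ 3 ≤ a i * b i * c i) :
    (∑ i ∈ s, t i) ^ 3 ≤ (∑ i ∈ s, a i) * (∑ i ∈ s, b i) * ∑ i ∈ s, c i := by
  have hpos : 0 ≤ (∑ i ∈ s, a i) * (∑ i ∈ s, b i) * ∑ i ∈ s, c i :=
    mul_nonneg (mul_nonneg (sum_nonneg ha) (sum_nonneg hb)) (sum_nonneg hc)
  set S := ∑ i ∈ s, t i ⊔ 0
  have htS : ∑ i ∈ s, t i ≤ S := sum_le_sum fun i _ => le_sup_left
  refine ((Odd.pow_le_pow (by decide)).2 htS).trans ?_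
  have hS : 0 ≤ S := sum_nonneg fun i _ => le_sup_right
  rcases hS.eq_or_lt with hS₀ | hS₀
  · simpa [← hS₀] using hpos
  have hab : (∑ i ∈ s, √(a i * b i)) ^ 2 ≤ (∑ i ∈ s, a i) * ∑ i ∈ s, b i :=
    sum_sq_le_sum_mul_sum_of_sq_le_mul s ha hb
      fun i hi => (Real.sq_sqrt (mul_nonneg (ha i hi) (hb i hi))).le
  have hct : (∑ i ∈ s, √(c i * (t i ⊔ 0))) ^ 2 ≤ (∑ i ∈ s, c i) * S :=
    sum_sq_le_sum_mul_sum_of_sq_le_mul s hc (fun i _ => le_sup_right)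
      fun i hi => (Real.sq_sqrt (mul_nonneg (hc i hi) le_sup_right)).le
  have hsq : S ^ 2 ≤ (∑ i ∈ s, √(a i * b i)) * ∑ i ∈ s, √(c i * (t i ⊔ 0)) := by
    refine sum_sq_le_sum_mul_sum_of_sq_le_mul s (fun i _ => Real.sqrt_nonneg _)
      (fun i _ => Real.sqrt_nonneg _) fun i hi => ?_
    have habi := mul_nonneg (ha i hi) (hb i hi)
    rw [← Real.sqrt_mul habi]
    refine Real.le_sqrt_of_sq_le ?_
    rcases le_total (t i) 0 with hti | hti
    · simp [hti]
    · rw [sup_of_le_left hti]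
      nlinarith [mul_le_mul_of_nonneg_right (ht i hi) hti]
  refine le_of_mul_le_mul_right ?_ hS₀
  calc S ^ 3 * S = (S ^ 2) ^ 2 := by ring
    _ ≤ ((∑ i ∈ s, √(a i * b i)) * ∑ i ∈ s, √(c i * (t i ⊔ 0))) ^ 2 := by gcongr
    _ = (∑ i ∈ s, √(a i * b i)) ^ 2 * (∑ i ∈ s, √(c i * (t i ⊔ 0))) ^ 2 := mul_pow ..
    _ ≤ ((∑ i ∈ s, a i) * ∑ i ∈ s, b i) * ((∑ i ∈ s, c i) * S) :=
        mul_le_mul hab hct (sq_nonneg _) (mul_nonneg (sum_nonneg ha) (sum_nonneg hb))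
    _ = _ := by ring

variable {α β : Type*} {rel : α → β → Prop} [∀ a, DecidablePred (rel a)]
  {Q : Finset α} {R : Finset β}

theorem sum_inv_card_bipartiteAbove_le :
    ∑ z ∈ Q ×ˢ R with rel z.1 z.2, (#(R.bipartiteAbove rel z.1) : ℝ)⁻¹ ≤ #Q := by
  rw [sum_filter, sum_product]
  calc ∑ q ∈ Q, ∑ x ∈ R, (if rel q x then (#(R.bipartiteAbove rel q) : ℝ)⁻¹ else 0)
      ≤ ∑ q ∈ Q, 1 := sum_le_sum fun q _ => by
        rw [← sum_filter, sum_const, nsmul_eq_mul]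
        exact mul_inv_le_one
    _ = #Q := by simp

theorem sum_inv_card_bipartiteBelow_le :
    ∑ z ∈ Q ×ˢ R with rel z.1 z.2, (#(Q.bipartiteBelow rel z.2) : ℝ)⁻¹ ≤ #R := by
  rw [sum_filter, sum_product_right]
  calc ∑ x ∈ R, ∑ q ∈ Q, (if rel q x then (#(Q.bipartiteBelow rel x) : ℝ)⁻¹ else 0)
      ≤ ∑ x ∈ R, 1 := sum_le_sum fun x _ => by
        rw [← sum_filter, sum_const, nsmul_eq_mul]
        exact mul_inv_le_one
    _ = #R := by simp

theorem sum_pow_three_le_sum_mul_card_mul_card {t w : α × β → ℝ}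
    (hw : ∀ z, 0 ≤ w z) (ht : ∀ z ∈ Q ×ˢ R, rel z.1 z.2 → t z ^ 3 ≤
      w z * (#(R.bipartiteAbove rel z.1) : ℝ)⁻¹ * (#(Q.bipartiteBelow rel z.2) : ℝ)⁻¹) :
    (∑ z ∈ Q ×ˢ R with rel z.1 z.2, t z) ^ 3 ≤
      (∑ z ∈ Q ×ˢ R with rel z.1 z.2, w z) * #Q * #R :=
  (sum_pow_three_le_of_pow_three_le _ (fun z _ => hw z) (fun z _ => by positivity)
    (fun z _ => by positivity) fun z hz => ht z (mem_filter.1 hz).1 (mem_filter.1 hz).2).trans <| by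
      have hw := sum_nonneg (s := {z ∈ Q ×ˢ R | rel z.1 z.2}) fun z _ => hw z
      gcongr
      exacts [sum_inv_card_bipartiteAbove_le, sum_inv_card_bipartiteBelow_le]

theorem one_le_card_bipartiteAbove {q : α} {x : β} (hx : x ∈ R) (h : rel q x) :
    1 ≤ #(R.bipartiteAbove rel q) := card_pos.2 ⟨x, (mem_bipartiteAbove _).2 ⟨hx, h⟩⟩

theorem one_le_card_bipartiteBelow {q : α} {x : β} (hq : q ∈ Q) (h : rel q x) :
    1 ≤ #(Q.bipartiteBelow rel x) := card_pos.2 ⟨q, (mem_bipartiteBelow _).2 ⟨hq, h⟩⟩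

theorem card_pow_three_le_sum_card_mul_card :
    (#{z ∈ Q ×ˢ R | rel z.1 z.2} : ℝ) ^ 3 ≤
      (∑ z ∈ Q ×ˢ R with rel z.1 z.2,
        (#(R.bipartiteAbove rel z.1) * #(Q.bipartiteBelow rel z.2) : ℝ)) * #Q * #R := by
  simpa using sum_pow_three_le_sum_mul_card_mul_card (Q := Q) (R := R) (t := fun _ => 1)
    (fun z => by positivity) fun z hz hzr => by
      have h₁ : (1 : ℝ) ≤ #(R.bipartiteAbove rel z.1) :=
        mod_cast one_le_card_bipartiteAbove (mem_product.1 hz).2 hzr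
      have h₂ : (1 : ℝ) ≤ #(Q.bipartiteBelow rel z.2) :=
        mod_cast one_le_card_bipartiteBelow (mem_product.1 hz).1 hzr
      field_simp
      norm_num

theorem one_sub_inv_sub_inv_pow_three_le {u v : ℝ} (hu : 1 ≤ u) (hv : 1 ≤ v) :
    (1 - u⁻¹ - v⁻¹) ^ 3 ≤ (u - 1) * (v - 1) * u⁻¹ * v⁻¹ := by
  have hu₀ : 0 < u := by linarith
  have hv₀ : 0 < v := by linarith
  have hu' := inv_pos.2 hu₀
  have hv' := inv_pos.2 hv₀
  calc (1 - u⁻¹ - v⁻¹) ^ 3 ≤ (1 - u⁻¹) * (1 - v⁻¹) := by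
        rcases le_total (1 - u⁻¹ - v⁻¹) 0 with ht | ht
        · exact (Odd.pow_nonpos (by decide) ht).trans <|
            mul_nonneg (sub_nonneg.2 (inv_le_one_of_one_le₀ hu))
              (sub_nonneg.2 (inv_le_one_of_one_le₀ hv))
        · refine (pow_le_of_le_one ht (by linarith) (by norm_num)).trans ?_
          nlinarith
    _ = _ := by field_simp

theorem card_sub_card_sub_card_pow_three_le :
    (#{z ∈ Q ×ˢ R | rel z.1 z.2} - #Q - #R : ℝ) ^ 3 ≤
      (∑ z ∈ Q ×ˢ R with rel z.1 z.2,
        (#(R.bipartiteAbove rel z.1) - 1) * (#(Q.bipartiteBelow rel z.2) - 1) : ℕ) * #Q * #R := by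
  have h := sum_pow_three_le_sum_mul_card_mul_card (rel := rel) (Q := Q) (R := R)
    (t := fun z => 1 - (#(R.bipartiteAbove rel z.1) : ℝ)⁻¹ - (#(Q.bipartiteBelow rel z.2) : ℝ)⁻¹)
    (w := fun z => (#(R.bipartiteAbove rel z.1) - 1 : ℕ) * (#(Q.bipartiteBelow rel z.2) - 1 : ℕ))
    (fun z => by positivity) fun z hz hzr => by
      have h₁ := one_le_card_bipartiteAbove (mem_product.1 hz).2 hzr
      have h₂ := one_le_card_bipartiteBelow (mem_product.1 hz).1 hzr
      push_cast [h₁, h₂]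
      exact one_sub_inv_sub_inv_pow_three_le (mod_cast h₁) (mod_cast h₂)
  rw [Nat.cast_sum]
  simp only [Nat.cast_mul]
  refine le_trans ((Odd.pow_le_pow (by decide)).2 ?_) h
  simp only [sum_sub_distrib, sum_const, nsmul_eq_mul, mul_one]
  linarith [sum_inv_card_bipartiteAbove_le (rel := rel) (Q := Q) (R := R),
    sum_inv_card_bipartiteBelow_le (rel := rel) (Q := Q) (R := R)]

theorem sum_card_sub_one_mul_card_sub_one_le [DecidableEq α] [DecidableEq β] {K : ℕ}
    (hK : ∀ a b, #{z ∈ Q ×ˢ R | rel z.1 z.2 ∧ rel a z.2 ∧ rel z.1 b ∧ z.1 ≠ a ∧ z.2 ≠ b} ≤ K) :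
    ∑ z ∈ Q ×ˢ R with rel z.1 z.2,
      (#(R.bipartiteAbove rel z.1) - 1) * (#(Q.bipartiteBelow rel z.2) - 1) ≤ K * (#Q * #R) := by
  let path (z p : α × β) : Prop := rel p.1 z.2 ∧ rel z.1 p.2 ∧ z.1 ≠ p.1 ∧ z.2 ≠ p.2
  have hpath z (hz : z ∈ {z ∈ Q ×ˢ R | rel z.1 z.2}) :
      (#(R.bipartiteAbove rel z.1) - 1) * (#(Q.bipartiteBelow rel z.2) - 1) =
        #((Q ×ˢ R).bipartiteAbove path z) := by
    rw [mem_filter, mem_product] at hz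
    rw [← card_erase_of_mem ((mem_bipartiteAbove _).2 ⟨hz.1.2, hz.2⟩),
      ← card_erase_of_mem ((mem_bipartiteBelow _).2 ⟨hz.1.1, hz.2⟩), mul_comm, ← card_product]
    congr 1
    ext ⟨p, p'⟩
    simp only [mem_product, mem_erase, mem_bipartiteAbove, mem_bipartiteBelow, path]
    tauto
  rw [sum_congr rfl hpath, sum_card_bipartiteAbove_eq_sum_card_bipartiteBelow, ← card_product,
    mul_comm, ← smul_eq_mul]
  refine sum_le_card_nsmul _ _ _ fun p _ => ?_
  simpa only [bipartiteBelow, filter_filter, path] using hK p.1 p.2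

theorem card_sub_card_sub_card_pow_three_le_of_card_path_le [DecidableEq α] [DecidableEq β] {K : ℕ}
    (hK : ∀ a b, #{z ∈ Q ×ˢ R | rel z.1 z.2 ∧ rel a z.2 ∧ rel z.1 b ∧ z.1 ≠ a ∧ z.2 ≠ b} ≤ K) :
    (#{z ∈ Q ×ˢ R | rel z.1 z.2} - #Q - #R : ℝ) ^ 3 ≤ K * (#Q * #R) ^ 2 := by
  have h := sum_card_sub_one_mul_card_sub_one_le hK
  refine card_sub_card_sub_card_pow_three_le.trans ?_
  calc _ ≤ (K * (#Q * #R) : ℕ) * (#Q : ℝ) * #R := by gcongr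
    _ = _ := by push_cast; ring

end Counting

section EdgeBound

variable {V : Type*} [Fintype V] {G : SimpleGraph V} [DecidableRel G.Adj] {χ : Sym2 V → V → Prop}

theorem card_adj_eq_sum_degree : #{z : V × V | G.Adj z.1 z.2} = ∑ x, G.degree x := by
  simp only [card_filter, ← univ_product_univ, sum_product, ← G.card_neighborFinset_eq_degree,
    G.neighborFinset_eq_filter]

/-- The inner vertices `(q, r)` of the walks `x q r y`. -/
def innerPairs (G : SimpleGraph V) [DecidableRel G.Adj] (x y : V) : Finset (V × V) :=
  {z | G.Adj x z.1 ∧ G.Adj z.1 z.2 ∧ G.Adj z.2 y}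

theorem sum_card_innerPairs :
    ∑ p : V × V, #(innerPairs G p.1 p.2) =
      ∑ z : V × V with G.Adj z.1 z.2, G.degree z.1 * G.degree z.2 := by
  let ends (z p : V × V) : Prop := G.Adj p.1 z.1 ∧ G.Adj z.2 p.2
  have hdeg z : G.degree z.1 * G.degree z.2 = #(univ.bipartiteAbove ends z) := by
    rw [← G.card_neighborFinset_eq_degree, ← G.card_neighborFinset_eq_degree, ← card_product]
    congr 1
    ext p
    simp [ends, bipartiteAbove, G.adj_comm]
  rw [sum_congr rfl fun z _ => hdeg z, sum_card_bipartiteAbove_eq_sum_card_bipartiteBelow]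
  refine sum_congr rfl fun p _ => congrArg card ?_
  ext z
  simp only [innerPairs, mem_filter_univ, mem_bipartiteBelow, ends]
  tauto

theorem sum_degree_pow_three_le_sum_card_innerPairs_mul :
    (∑ x, G.degree x : ℝ) ^ 3 ≤
      (∑ p : V × V, #(innerPairs G p.1 p.2) : ℕ) * (Fintype.card V : ℝ) ^ 2 := by
  have h := card_pow_three_le_sum_card_mul_card (rel := G.Adj) (Q := univ) (R := univ)
  have habove x : #(univ.bipartiteAbove G.Adj x) = G.degree x := by
    simp [bipartiteAbove, ← G.card_neighborFinset_eq_degree, G.neighborFinset_eq_filter]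
  have hbelow x : #(univ.bipartiteBelow G.Adj x) = G.degree x := by
    simp [bipartiteBelow, ← G.card_neighborFinset_eq_degree, G.neighborFinset_eq_filter, G.adj_comm]
  simp only [univ_product_univ, habove, hbelow, card_univ, card_adj_eq_sum_degree] at h
  rw [sum_card_innerPairs]
  push_cast at h ⊢
  rwa [sq, ← mul_assoc]

open Classical in
/-- The middle edges of the paths from `x` to `y` with colors `C`. -/
noncomputable def middlePairs (G : SimpleGraph V) [DecidableRel G.Adj] (χ : Sym2 V → V → Prop)
    (x y : V) (C : PathColors) : Finset (V × V) :=
  {z ∈ G.neighborFinset x ×ˢ G.neighborFinset y | IsMiddle G χ x y C z.1 z.2}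

theorem card_innerPairs_le (χ : Sym2 V → V → Prop) (x y : V) :
    #(innerPairs G x y) ≤ ∑ C, #(middlePairs G χ x y C) + (G.degree x + G.degree y) := by
  classical
  have hsub : innerPairs G x y ⊆ univ.biUnion (middlePairs G χ x y) ∪
      (G.neighborFinset x ×ˢ {x} ∪ {y} ×ˢ G.neighborFinset y) := by
    rintro ⟨q, r⟩ hz
    simp only [innerPairs, mem_filter_univ] at hz
    by_cases hr : r = x
    · simp [hr, hz]
    by_cases hq : q = y
    · simp [hq, hz.2.2.symm]
    have hqr : IsMiddle G χ x y (pathColors χ x y q r) q r := ⟨hz.1, hz.2.1, hz.2.2, hq, hr, rfl⟩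
    refine mem_union_left _ (mem_biUnion.2 ⟨_, mem_univ _, mem_filter.2 ⟨?_, hqr⟩⟩)
    simp [hz.1, hz.2.2.symm]
  calc #(innerPairs G x y)
      ≤ #(univ.biUnion (middlePairs G χ x y)) +
          #(G.neighborFinset x ×ˢ {x} ∪ {y} ×ˢ G.neighborFinset y) :=
        (card_le_card hsub).trans (card_union_le _ _)
    _ ≤ ∑ C, #(middlePairs G χ x y C) +
          (#(G.neighborFinset x ×ˢ {x}) + #({y} ×ˢ G.neighborFinset y)) :=
        add_le_add card_biUnion_le (card_union_le _ _)
    _ = _ := by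
        simp only [card_product, card_singleton, mul_one, one_mul, G.card_neighborFinset_eq_degree]

theorem card_middlePairs_sub_pow_three_le (hχ : IsSeparating G χ) (x y : V) (C : PathColors) :
    (#(middlePairs G χ x y C) - G.degree x - G.degree y : ℝ) ^ 3 ≤
      thetaBound * (G.degree x * G.degree y) ^ 2 := by
  classical
  have h := card_sub_card_sub_card_pow_three_le_of_card_path_le (rel := IsMiddle G χ x y C)
    (Q := G.neighborFinset x) (R := G.neighborFinset y) (K := thetaBound) fun a b =>
      (card_middlePaths_lt_thetaBound hχ _ fun z hz => (mem_filter.1 hz).2).le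
  simp only [G.card_neighborFinset_eq_degree] at h
  rw [middlePairs]
  convert h

theorem sum_card_middlePairs_sub_pow_three_le (hχ : IsSeparating G χ) :
    (∑ p : V × V, ∑ C, (#(middlePairs G χ p.1 p.2 C) - G.degree p.1 - G.degree p.2 : ℝ)) ^ 3 ≤
      thetaBound * Fintype.card PathColors ^ 3 * (∑ x, (G.degree x : ℝ)) ^ 4 *
        Fintype.card V ^ 2 := by
  have hdeg : ∑ i : (V × V) × PathColors, (G.degree i.1.1 * G.degree i.1.2 : ℝ) =
      Fintype.card PathColors * (∑ x, (G.degree x : ℝ)) ^ 2 := by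
    rw [Fintype.sum_prod_type' fun (p : V × V) (_ : PathColors) =>
      (G.degree p.1 * G.degree p.2 : ℝ)]
    simp only [sum_const, card_univ, nsmul_eq_mul, ← mul_sum]
    rw [sq, sum_mul_sum, Fintype.sum_prod_type' fun x y => (G.degree x * G.degree y : ℝ)]
  have h := sum_pow_three_le_of_pow_three_le (univ : Finset ((V × V) × PathColors))
    (t := fun i => #(middlePairs G χ i.1.1 i.1.2 i.2) - G.degree i.1.1 - G.degree i.1.2)
    (a := fun _ => thetaBound) (b := fun i => G.degree i.1.1 * G.degree i.1.2)
    (c := fun i => G.degree i.1.1 * G.degree i.1.2)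
    (fun _ _ => by positivity) (fun _ _ => by positivity) (fun _ _ => by positivity)
    (fun _ _ => (card_middlePairs_sub_pow_three_le hχ _ _ _).trans_eq (by ring))
  rw [← Fintype.sum_prod_type']
  refine h.trans_eq ?_
  rw [hdeg, sum_const, card_univ, Fintype.card_prod, Fintype.card_prod, nsmul_eq_mul]
  push_cast
  ring

theorem sum_card_innerPairs_le (χ : Sym2 V → V → Prop) :
    (∑ p : V × V, #(innerPairs G p.1 p.2) : ℕ) ≤
      (∑ p : V × V, ∑ C, (#(middlePairs G χ p.1 p.2 C) - G.degree p.1 - G.degree p.2 : ℝ)) +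
        2 * (Fintype.card PathColors + 1) * Fintype.card V * ∑ x, (G.degree x : ℝ) := by
  have hdeg : ∑ p : V × V, (G.degree p.1 + G.degree p.2 : ℝ) =
      2 * (Fintype.card V * ∑ x, (G.degree x : ℝ)) := by
    rw [Fintype.sum_prod_type' fun x y => (G.degree x + G.degree y : ℝ)]
    simp only [sum_add_distrib, sum_const, card_univ, nsmul_eq_mul, ← mul_sum]
    ring
  calc ((∑ p : V × V, #(innerPairs G p.1 p.2) : ℕ) : ℝ)
      ≤ ∑ p : V × V, (∑ C, (#(middlePairs G χ p.1 p.2 C) : ℝ) + (G.degree p.1 + G.degree p.2)) := by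
        exact_mod_cast sum_le_sum fun (p : V × V) _ => card_innerPairs_le χ p.1 p.2
    _ = (∑ p : V × V, ∑ C, (#(middlePairs G χ p.1 p.2 C) - G.degree p.1 - G.degree p.2 : ℝ)) +
          (Fintype.card PathColors + 1) * ∑ p : V × V, (G.degree p.1 + G.degree p.2 : ℝ) := by
        rw [mul_sum, ← sum_add_distrib]
        refine sum_congr rfl fun p _ => ?_
        simp only [sum_sub_distrib, sum_const, card_univ, nsmul_eq_mul]
        ring
    _ = _ := by rw [hdeg]; ring

theorem pow_five_le_of_pow_three_le {M n T A B : ℝ} (hM : 0 ≤ M) (hB : 0 ≤ B)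
    (hMn : M ≤ n ^ 2) (h : M ^ 3 ≤ (T + A * n * M) * n ^ 2) (hT : T ^ 3 ≤ B * M ^ 4 * n ^ 2) :
    M ^ 5 ≤ (8 * B + 4 * A ^ 2) * n ^ 8 := by
  rcases hM.eq_or_lt with rfl | hM
  · rw [zero_pow (by norm_num)]
    positivity
  rcases le_total T (A * n * M) with hTA | hTA
  · have hsq : M ^ 2 ≤ 2 * A * n ^ 3 := by
      refine le_of_mul_le_mul_right ?_ hM
      nlinarith [mul_le_mul_of_nonneg_right hTA (sq_nonneg n)]
    calc M ^ 5 = (M ^ 2) ^ 2 * M := by ring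
      _ ≤ (2 * A * n ^ 3) ^ 2 * n ^ 2 := by gcongr
      _ = 4 * A ^ 2 * n ^ 8 := by ring
      _ ≤ _ := by gcongr; linarith
  · refine le_of_mul_le_mul_right ?_ (pow_pos hM 4)
    calc M ^ 5 * M ^ 4 = (M ^ 3) ^ 3 := by ring
      _ ≤ (2 * T * n ^ 2) ^ 3 := by
        gcongr
        nlinarith [mul_le_mul_of_nonneg_right hTA (sq_nonneg n)]
      _ = T ^ 3 * (8 * n ^ 6) := by ring
      _ ≤ B * M ^ 4 * n ^ 2 * (8 * n ^ 6) := by gcongr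
      _ = 8 * B * n ^ 8 * M ^ 4 := by ring
      _ ≤ _ := by gcongr; nlinarith [sq_nonneg A]

/-- The constant in the edge bound `(2e)⁵ ≤ edgeConstant · n⁸` for separating graphs. -/
noncomputable def edgeConstant : ℝ :=
  8 * (thetaBound * Fintype.card PathColors ^ 3) + 4 * (2 * (Fintype.card PathColors + 1)) ^ 2

theorem edgeConstant_nonneg : 0 ≤ edgeConstant := by
  unfold edgeConstant
  positivity

theorem IsSeparating.sum_degree_pow_five_le (hχ : IsSeparating G χ) :
    (∑ x, G.degree x : ℝ) ^ 5 ≤ edgeConstant * Fintype.card V ^ 8 := by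
  refine pow_five_le_of_pow_three_le (by positivity) (by positivity) ?_ ?_
    (sum_card_middlePairs_sub_pow_three_le hχ)
  · calc (∑ x, G.degree x : ℝ) ≤ ∑ _x : V, (Fintype.card V : ℝ) :=
        sum_le_sum fun x _ => mod_cast (G.degree_lt_card_verts x).le
      _ = Fintype.card V ^ 2 := by rw [sum_const, card_univ, nsmul_eq_mul, sq]
  · exact sum_degree_pow_three_le_sum_card_innerPairs_mul.trans
      (by gcongr; exact sum_card_innerPairs_le χ)

end EdgeBound

section Averaging

variable {ι α : Type*} [Fintype ι] [DecidableEq α]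

/-- The coordinates in which the words `w` and `x` agree, that is, the zero set of `x - w`. -/
def agreement (w x : ι → α) : Finset ι := {k | x k = w k}

theorem mem_agreement {w x : ι → α} {k : ι} : k ∈ agreement w x ↔ x k = w k := mem_filter_univ k

theorem card_agreement_eq [DecidableEq ι] [Fintype α] (x : ι → α) (e : Finset ι) :
    #{w | agreement w x = e} = (Fintype.card α - 1) ^ (Fintype.card ι - #e) := by
  have hpi : ({w | agreement w x = e} : Finset (ι → α)) =
      Fintype.piFinset fun k => if k ∈ e then {x k} else univ.erase (x k) := by
    ext w
    simp only [mem_filter_univ, Fintype.mem_piFinset, Finset.ext_iff, mem_agreement]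
    refine forall_congr' fun k => ?_
    split_ifs with hk <;> simp [hk, eq_comm]
  simp only [hpi, Fintype.card_piFinset, apply_ite card, card_singleton,
    card_erase_of_mem (mem_univ _), card_univ, prod_ite, prod_const, one_pow, one_mul]
  rw [← card_compl, filter_notMem_eq_sdiff, compl_eq_univ_sdiff]

theorem card_card_agreement_eq [DecidableEq ι] [Fintype α] (x : ι → α) (k : ℕ) :
    #{w | #(agreement w x) = k} =
      (Fintype.card ι).choose k * (Fintype.card α - 1) ^ (Fintype.card ι - k) := by
  have hmaps : ∀ w ∈ ({w | #(agreement w x) = k} : Finset (ι → α)),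
      agreement w x ∈ powersetCard k univ := by simp
  have hfiber : ∀ e ∈ powersetCard k (univ : Finset ι),
      #{w ∈ ({w | #(agreement w x) = k} : Finset (ι → α)) | agreement w x = e} =
        (Fintype.card α - 1) ^ (Fintype.card ι - k) := by
    intro e he
    rw [mem_powersetCard_univ] at he
    rw [← he, ← card_agreement_eq x e, filter_filter]
    exact congrArg card (filter_congr fun w _ => and_iff_right_of_imp (congrArg card))
  rw [card_eq_sum_card_fiberwise hmaps, sum_congr rfl hfiber, sum_const, card_powersetCard,
    card_univ, smul_eq_mul]

/-- The graph whose edges are the pairs of coordinates in which some word of `C` agrees with `w`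
and outside of which it does not. -/
def agreementGraph [DecidableEq ι] (C : Finset (ι → α)) (w : ι → α) : SimpleGraph ι :=
  .fromEdgeSet {e | ∃ x ∈ C, agreement w x = e.toFinset}

theorem exists_eq_of_forall_eq_or_eq_or_eq :
    ∀ a b c t : Fin 3, (∀ s, s = a ∨ s = b ∨ s = c) →
      (a = t ∧ b ≠ t ∧ c ≠ t ∧ ¬(b = t + 1 ↔ c = t + 1)) ∨
      (b = t ∧ a ≠ t ∧ c ≠ t ∧ ¬(a = t + 1 ↔ c = t + 1)) ∨
      (c = t ∧ a ≠ t ∧ b ≠ t ∧ ¬(a = t + 1 ↔ b = t + 1)) := by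
  decide

variable {n : ℕ} {C : Finset (Fin n → Fin 3)}

theorem Trifferent.exists_mem_agreement (hC : Trifferent C) (w : Fin n → Fin 3)
    {x y z : Fin n → Fin 3} (hx : x ∈ C) (hy : y ∈ C) (hz : z ∈ C) (hxy : x ≠ y) (hxz : x ≠ z)
    (hyz : y ≠ z) :
    (∃ i ∈ agreement w x, i ∉ agreement w y ∧ i ∉ agreement w z ∧
        ¬(y i = w i + 1 ↔ z i = w i + 1)) ∨
      (∃ i ∈ agreement w y, i ∉ agreement w x ∧ i ∉ agreement w z ∧
        ¬(x i = w i + 1 ↔ z i = w i + 1)) ∨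
      ∃ i ∈ agreement w z, i ∉ agreement w x ∧ i ∉ agreement w y ∧
        ¬(x i = w i + 1 ↔ y i = w i + 1) := by
  obtain ⟨i, hi⟩ := hC x hx y hy z hz hxy hxz hyz
  have hcover (s : Fin 3) : s = x i ∨ s = y i ∨ s = z i := by
    simpa using hi.ge (Set.mem_univ s)
  simp only [mem_agreement]
  rcases exists_eq_of_forall_eq_or_eq_or_eq _ _ _ (w i) hcover with h | h | h
  exacts [.inl ⟨i, h⟩, .inr (.inl ⟨i, h⟩), .inr (.inr ⟨i, h⟩)]

theorem Trifferent.exists_isSeparating (hC : Trifferent C) (w : Fin n → Fin 3) :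
    ∃ χ, IsSeparating (agreementGraph C w) χ := by
  have hword e (he : e ∈ (agreementGraph C w).edgeSet) : ∃ x ∈ C, agreement w x = e.toFinset := by
    rw [agreementGraph, SimpleGraph.edgeSet_fromEdgeSet] at he
    exact he.1
  choose! word hmem hagree using hword
  refine ⟨fun e v => word e v = w v + 1, fun e₁ h₁ e₂ h₂ e₃ h₃ h₁₂ h₁₃ h₂₃ => ?_⟩
  have hne {e e'} (h : e ∈ (agreementGraph C w).edgeSet) (h' : e' ∈ (agreementGraph C w).edgeSet)
      (hee : e ≠ e') : word e ≠ word e' := fun heq => hee <| Sym2.ext fun v => by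
    rw [← Sym2.mem_toFinset, ← Sym2.mem_toFinset, ← hagree e h, ← hagree e' h', heq]
  have h := hC.exists_mem_agreement w (hmem _ h₁) (hmem _ h₂) (hmem _ h₃) (hne h₁ h₂ h₁₂)
    (hne h₁ h₃ h₁₃) (hne h₂ h₃ h₂₃)
  simpa only [Separated, Distinguishes, hagree _ h₁, hagree _ h₂, hagree _ h₃,
    Sym2.mem_toFinset] using h

theorem Trifferent.card_filter_agreement_eq_le (hC : Trifferent C) (w : Fin n → Fin 3)
    (e : Finset (Fin n)) : #{x ∈ C | agreement w x = e} ≤ 2 := by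
  by_contra! h
  obtain ⟨x, y, z, hx, hy, hz, hxy, hxz, hyz⟩ := two_lt_card_iff.1 h
  rw [mem_filter] at hx hy hz
  have := hC.exists_mem_agreement w hx.1 hy.1 hz.1 hxy hxz hyz
  simp only [hx.2, hy.2, hz.2] at this
  tauto

theorem Trifferent.card_filter_card_agreement_eq_two_le (hC : Trifferent C) (w : Fin n → Fin 3)
    [DecidableRel (agreementGraph C w).Adj] :
    #{x ∈ C | #(agreement w x) = 2} ≤ ∑ v, (agreementGraph C w).degree v := by
  rw [SimpleGraph.sum_degrees_eq_twice_card_edges]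
  have hmaps : ∀ x ∈ ({x ∈ C | #(agreement w x) = 2} : Finset _),
      agreement w x ∈ (agreementGraph C w).edgeFinset.image Sym2.toFinset := by
    intro x hx
    rw [mem_filter] at hx
    obtain ⟨i, j, hij, hx₂⟩ := card_eq_two.1 hx.2
    refine mem_image.2 ⟨s(i, j), ?_, ?_⟩
    · rw [SimpleGraph.mem_edgeFinset, SimpleGraph.mem_edgeSet, agreementGraph,
        SimpleGraph.fromEdgeSet_adj]
      exact ⟨⟨x, hx.1, hx₂.trans Sym2.toFinset_mk_eq.symm⟩, hij⟩
    · rw [hx₂, Sym2.toFinset_mk_eq]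
  refine (card_le_mul_card_image_of_maps_to hmaps 2 fun e _ => ?_).trans ?_
  · refine (card_le_card ?_).trans (hC.card_filter_agreement_eq_le w e)
    exact filter_subset_filter _ (filter_subset _ _)
  · gcongr
    exact card_image_le

open Classical in
theorem Trifferent.card_mul_choose_le (hC : Trifferent C) :
    #C * (n.choose 2 * 2 ^ (n - 2)) ≤
      ∑ w : Fin n → Fin 3, ∑ v, (agreementGraph C w).degree v :=
  calc #C * (n.choose 2 * 2 ^ (n - 2))
      = ∑ x ∈ C, #{w | #(agreement w x) = 2} := by
        simp [card_card_agreement_eq]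
    _ = ∑ w, #{x ∈ C | #(agreement w x) = 2} :=
        sum_card_bipartiteAbove_eq_sum_card_bipartiteBelow fun x w => #(agreement w x) = 2
    _ ≤ _ := sum_le_sum fun w _ => hC.card_filter_card_agreement_eq_two_le w

theorem IsSeparating.sum_degree_le {V : Type*} [Fintype V] {G : SimpleGraph V}
    [DecidableRel G.Adj] {χ : Sym2 V → V → Prop} (hχ : IsSeparating G χ) :
    (∑ x, G.degree x : ℝ) ≤ edgeConstant ^ (1 / 5 : ℝ) * (Fintype.card V : ℝ) ^ (8 / 5 : ℝ) := by
  have hconst := edgeConstant_nonneg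
  refine le_of_pow_le_pow_left₀ (n := 5) (by norm_num) (by positivity) ?_
  refine hχ.sum_degree_pow_five_le.trans_eq ?_
  rw [mul_pow, ← Real.rpow_mul_natCast hconst, ← Real.rpow_mul_natCast (Nat.cast_nonneg _)]
  norm_num

theorem Trifferent.card_le (hC : Trifferent C) (hn : 2 ≤ n) :
    (#C : ℝ) ≤ 16 * edgeConstant ^ (1 / 5 : ℝ) * (n : ℝ) ^ (-2 / 5 : ℝ) * (3 / 2) ^ n := by
  classical
  have hn' : (2 : ℝ) ≤ n := mod_cast hn
  set l := edgeConstant ^ (1 / 5 : ℝ)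
  have havg : #C * (n.choose 2 * 2 ^ (n - 2)) ≤ 3 ^ n * (l * (n : ℝ) ^ (8 / 5 : ℝ)) :=
    calc (#C * (n.choose 2 * 2 ^ (n - 2)) : ℝ)
        ≤ ∑ w : Fin n → Fin 3, ∑ v, ((agreementGraph C w).degree v : ℝ) :=
          mod_cast hC.card_mul_choose_le
      _ ≤ ∑ _w : Fin n → Fin 3, l * (n : ℝ) ^ (8 / 5 : ℝ) := by
          gcongr with w
          obtain ⟨χ, hχ⟩ := hC.exists_isSeparating w
          simpa only [Fintype.card_fin] using hχ.sum_degree_le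
      _ = _ := by simp
  have hchoose : (n : ℝ) ^ 2 * 2 ^ n ≤ 16 * (n.choose 2 * 2 ^ (n - 2)) := by
    rw [Nat.cast_choose_two, ← Nat.sub_add_cancel hn, pow_add, Nat.sub_add_cancel hn]
    have hsq : (n : ℝ) ^ 2 ≤ 2 * (n * (n - 1)) := by nlinarith
    nlinarith [mul_le_mul_of_nonneg_right hsq (pow_nonneg zero_le_two (n - 2) : (0 : ℝ) ≤ _)]
  have hrpow : (n : ℝ) ^ (8 / 5 : ℝ) = n ^ 2 * (n : ℝ) ^ (-2 / 5 : ℝ) := by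
    rw [← Real.rpow_natCast, ← Real.rpow_add (by linarith)]
    norm_num
  rw [div_pow, mul_div_assoc', le_div_iff₀ (by positivity)]
  refine le_of_mul_le_mul_left ?_ (by positivity : (0 : ℝ) < n ^ 2)
  calc (n : ℝ) ^ 2 * (#C * 2 ^ n) = #C * (n ^ 2 * 2 ^ n) := by ring
    _ ≤ #C * (16 * (n.choose 2 * 2 ^ (n - 2)) : ℝ) := by gcongr
    _ = 16 * (#C * (n.choose 2 * 2 ^ (n - 2)) : ℝ) := by ring
    _ ≤ 16 * (3 ^ n * (l * (n : ℝ) ^ (8 / 5 : ℝ))) := by gcongr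
    _ = _ := by rw [hrpow]; ring

end Averaging

/-- Main theorem: `T(n) ≤ c · n^(-2/5) · (3/2)^n`. -/
theorem main_trifference_bound :
    ∃ c : ℝ, ∀ n : ℕ, 1 ≤ n → ∀ C : Finset (Fin n → Fin 3), Trifferent C →
      (C.card : ℝ) ≤ c * (n : ℝ) ^ (-(2 : ℝ) / 5) * (3 / 2) ^ n := by
  refine ⟨16 * edgeConstant ^ (1 / 5 : ℝ) + 3, fun n hn C hC => ?_⟩
  rcases hn.eq_or_lt with rfl | hn
  · have hcard : (C.card : ℝ) ≤ 3 := mod_cast (card_le_univ C).trans_eq (by simp)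
    have hpos := Real.rpow_nonneg edgeConstant_nonneg (1 / 5)
    rw [Nat.cast_one, Real.one_rpow]
    linarith
  · refine (hC.card_le hn).trans ?_
    gcongr
    linarith
end
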